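/- Assume Hypothesis (A) holds and let u ∈ L^∞([0,T], 𝒰) be a fixed control. Let (Y^1, μ^1) and (Y^2, μ^2) be two solutions (in the sense of Definition of solution) of the coupled system Ẏ_k = u_k (k=1,…,m), ∂_t μ + ∇·[(H*μ + Σ_{ℓ=1}^d G^ℓ*μ_{mℓ}) μ] = 0, relative to the same control u and to respective initial data (Y^{0,i}, μ^{0,i}) ∈ χ with μ^{0,i} compactly supported, i = 1,2. Then there exists a constant C_T > 0 such that ‖(Y^1(t), μ^1(t)) − (Y^2(t), μ^2(t))‖_χ ≤ C_T ‖(Y^{0,1}, μ^{0,1}) − (Y^{0,2}, μ^{0,2})‖_χ for all t ∈ [0,T]. -/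

import Mathlib

open MeasureTheory Set Metric
open scoped BigOperators ENNReal NNReal RealInnerProductSpace

noncomputable section

/-- The set of couplings of two measures: probability measures on the product with the
prescribed marginals. -/
def couplings {E : Type*} [MeasurableSpace E]
    (μ ν : Measure E) : Set (Measure (E × E)) :=
  {π | IsProbabilityMeasure π ∧ π.map Prod.fst = μ ∧ π.map Prod.snd = ν}

/-- The 1-Wasserstein distance `W₁(μ,ν) = inf_{π ∈ Π(μ,ν)} ∫ |x−y| dπ(x,y)`. -/
def W1 {E : Type*} [MeasurableSpace E] [PseudoMetricSpace E]
    (μ ν : Measure E) : ℝ :=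
  sInf ((fun π : Measure (E × E) => ∫ p, dist p.1 p.2 ∂π) '' couplings μ ν)

/-- The topological support of a measure. -/
def msupport {E : Type*} [MeasurableSpace E] [TopologicalSpace E]
    (μ : Measure E) : Set E :=
  {x | ∀ U ∈ nhds x, μ U ≠ 0}

/-- The distance on `χ = ℝ^{dm} × 𝒫₁(ℝ^d)`:
`‖(Y,μ) − (Y',μ')‖_χ = (1/m) ∑_k |Y_k − Y'_k| + W₁(μ,μ')`. -/
def chiDist {d m : ℕ}
    (Y Y' : Fin m → EuclideanSpace ℝ (Fin d))
    (μ μ' : Measure (EuclideanSpace ℝ (Fin d))) : ℝ :=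
  (m : ℝ)⁻¹ * ∑ k : Fin m, ‖Y k - Y' k‖ + W1 μ μ'

/-- The empirical measure `(1/N) ∑_i δ_{X_i}`. -/
def empMeas {d N : ℕ} (X : Fin N → EuclideanSpace ℝ (Fin d)) :
    Measure (EuclideanSpace ℝ (Fin d)) :=
  (N : ℝ≥0∞)⁻¹ • ∑ i : Fin N, Measure.dirac (X i)

/-- The mean-field vector field `x ↦ (H*μ)(x) + ∑_ℓ (G^ℓ*μ_{mℓ})(x)`,
where `μ_{mℓ} = (1/m) ∑_k u_{kℓ} δ_{Y_k}`. -/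
def mfField {d m : ℕ}
    (H : EuclideanSpace ℝ (Fin d) → EuclideanSpace ℝ (Fin d))
    (G : Fin d → EuclideanSpace ℝ (Fin d) → EuclideanSpace ℝ (Fin d))
    (μ : Measure (EuclideanSpace ℝ (Fin d)))
    (u Y : Fin m → EuclideanSpace ℝ (Fin d))
    (x : EuclideanSpace ℝ (Fin d)) : EuclideanSpace ℝ (Fin d) :=
  (∫ ξ, H (x - ξ) ∂μ) + ∑ ℓ : Fin d, (m : ℝ)⁻¹ • ∑ k : Fin m, (u k ℓ) • G ℓ (x - Y k)

/-- Solution of the coupled leader/mean-field system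
`Ẏ_k = u_k`, `∂_t μ + ∇·[(H*μ + ∑_ℓ G^ℓ*μ_{mℓ}) μ] = 0` on `[0,T]`, in the sense of the
Definition of solution: `μ(t)` are probability measures, equi-compactly supported;
`(Y,μ)` is continuous w.r.t. the `χ`-metric; `Y` is a Carathéodory solution of
`Ẏ_k = u_k`; and the continuity equation holds in weak form against `C_c^∞` test
functions. -/
def IsMFSol {d m : ℕ} (T : ℝ)
    (H : EuclideanSpace ℝ (Fin d) → EuclideanSpace ℝ (Fin d))
    (G : Fin d → EuclideanSpace ℝ (Fin d) → EuclideanSpace ℝ (Fin d))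
    (u : ℝ → Fin m → EuclideanSpace ℝ (Fin d))
    (Y : ℝ → Fin m → EuclideanSpace ℝ (Fin d))
    (μ : ℝ → Measure (EuclideanSpace ℝ (Fin d))) : Prop :=
  (∀ t ∈ Icc (0:ℝ) T, IsProbabilityMeasure (μ t)) ∧
  (∃ R > 0, ∀ t ∈ Icc (0:ℝ) T,
      msupport (μ t) ⊆ closedBall (0 : EuclideanSpace ℝ (Fin d)) R) ∧
  (∀ t ∈ Icc (0:ℝ) T, ∀ ε > 0, ∃ δ > 0, ∀ s ∈ Icc (0:ℝ) T,
      |s - t| < δ → chiDist (Y s) (Y t) (μ s) (μ t) < ε) ∧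
  (∀ k, ∀ t ∈ Icc (0:ℝ) T, Y t k = Y 0 k + ∫ s in (0:ℝ)..t, u s k) ∧
  (∀ φ : EuclideanSpace ℝ (Fin d) → ℝ, ContDiff ℝ (⊤ : ℕ∞) φ → HasCompactSupport φ →
      ∀ t ∈ Icc (0:ℝ) T,
        ∫ x, φ x ∂(μ t) = (∫ x, φ x ∂(μ 0)) +
          ∫ s in (0:ℝ)..t,
            ∫ x, ⟪gradient φ x, mfField H G (μ s) (u s) (Y s) x⟫ ∂(μ s))

/-- Hypothesis (A): `H` and the `G^ℓ` are locally Lipschitz with sub-linear growth, the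
convolution with `H` is Lipschitz in the measure argument w.r.t. `W₁` (uniformly on balls,
for compactly supported probability measures), and the convolution with `G^ℓ` against
weighted empirical measures with common weights bounded by `M` is Lipschitz in the atoms. -/
def HypA {d : ℕ} (m : ℕ)
    (H : EuclideanSpace ℝ (Fin d) → EuclideanSpace ℝ (Fin d))
    (G : Fin d → EuclideanSpace ℝ (Fin d) → EuclideanSpace ℝ (Fin d)) : Prop :=
  LocallyLipschitz H ∧ (∀ ℓ, LocallyLipschitz (G ℓ)) ∧
  (∃ C ≥ 0, (∀ x, ‖H x‖ ≤ C * (1 + ‖x‖)) ∧ ∀ ℓ x, ‖G ℓ x‖ ≤ C * (1 + ‖x‖)) ∧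
  (∀ ρ > 0, ∀ R > 0, ∃ L ≥ 0,
    ∀ μ ν : Measure (EuclideanSpace ℝ (Fin d)),
      IsProbabilityMeasure μ → IsProbabilityMeasure ν →
      msupport μ ⊆ closedBall (0 : EuclideanSpace ℝ (Fin d)) R →
      msupport ν ⊆ closedBall (0 : EuclideanSpace ℝ (Fin d)) R →
      ∀ y ∈ closedBall (0 : EuclideanSpace ℝ (Fin d)) ρ,
        ‖(∫ ξ, H (y - ξ) ∂μ) - ∫ ξ, H (y - ξ) ∂ν‖ ≤ L * W1 μ ν) ∧
  (∀ ρ > 0, ∀ M ≥ 0, ∃ L ≥ 0, ∀ ℓ : Fin d, ∀ w : Fin m → ℝ, (∀ k, |w k| ≤ M) →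
    ∀ Y Y' : Fin m → EuclideanSpace ℝ (Fin d),
      ∀ y ∈ closedBall (0 : EuclideanSpace ℝ (Fin d)) ρ,
        ‖(m : ℝ)⁻¹ • ∑ k : Fin m, w k • (G ℓ (y - Y k) - G ℓ (y - Y' k))‖
          ≤ L * ((m : ℝ)⁻¹ * ∑ k : Fin m, ‖Y k - Y' k‖))

section MeanFieldStability
open scoped ContDiff Convolution Topology
open Filter

section SmoothFunctions
variable {E : Type*} [NormedAddCommGroup E] [InnerProductSpace ℝ E]

/-- Smooth functions with derivative bounded by `Λ` and `A`-Lipschitz. -/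
structure IsC11 (ψ : E → ℝ) (Λ A : ℝ) : Prop where
  smooth : ContDiff ℝ ∞ ψ
  bound : ∀ x, ‖fderiv ℝ ψ x‖ ≤ Λ
  lip : ∀ x y, ‖fderiv ℝ ψ x - fderiv ℝ ψ y‖ ≤ A * ‖x - y‖

theorem IsC11.comp_id_add {ψ : E → ℝ} {Λ A : ℝ} (hψ : IsC11 ψ Λ A) (hA : 0 ≤ A) {V : E → E}
    (hV : ContDiff ℝ ∞ V) {k : ℝ≥0} (hk : LipschitzWith k V) {C : ℝ}
    (hV' : ∀ x y, ‖fderiv ℝ V x - fderiv ℝ V y‖ ≤ C * ‖x - y‖) :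
    IsC11 (fun x => ψ (x + V x)) (Λ * (1 + k)) (A * (1 + k) ^ 2 + Λ * C) := by
  have hΛ : 0 ≤ Λ := (norm_nonneg _).trans (hψ.bound 0)
  have hVd : Differentiable ℝ V := hV.differentiable (by simp)
  have hψd : Differentiable ℝ ψ := hψ.smooth.differentiable (by simp)
  have hd : ∀ x, fderiv ℝ (fun x => ψ (x + V x)) x =
      (fderiv ℝ ψ (x + V x)).comp (ContinuousLinearMap.id ℝ E + fderiv ℝ V x) := fun x =>
    ((hψd _).hasFDerivAt.comp x ((hasFDerivAt_id x).add (hVd x).hasFDerivAt)).fderiv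
  have hn : ∀ x, ‖ContinuousLinearMap.id ℝ E + fderiv ℝ V x‖ ≤ 1 + k := fun x =>
    (norm_add_le _ _).trans
      (add_le_add ContinuousLinearMap.norm_id_le (norm_fderiv_le_of_lipschitz ℝ hk))
  refine ⟨hψ.smooth.comp (contDiff_id.add hV), fun x => ?_, fun x y => ?_⟩
  · rw [hd]
    refine (ContinuousLinearMap.opNorm_comp_le _ _).trans ?_
    exact mul_le_mul (hψ.bound _) (hn x) (norm_nonneg _) hΛ
  · have hT : ‖(x + V x) - (y + V y)‖ ≤ (1 + k) * ‖x - y‖ := by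
      have := hk.norm_sub_le x y
      calc _ = ‖(x - y) + (V x - V y)‖ := by congr 1; abel
        _ ≤ ‖x - y‖ + ‖V x - V y‖ := norm_add_le _ _
        _ ≤ _ := by linarith
    rw [hd, hd]
    have : (fderiv ℝ ψ (x + V x)).comp (ContinuousLinearMap.id ℝ E + fderiv ℝ V x) -
        (fderiv ℝ ψ (y + V y)).comp (ContinuousLinearMap.id ℝ E + fderiv ℝ V y) =
        (fderiv ℝ ψ (x + V x) - fderiv ℝ ψ (y + V y)).comp
          (ContinuousLinearMap.id ℝ E + fderiv ℝ V x) +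
        (fderiv ℝ ψ (y + V y)).comp (fderiv ℝ V x - fderiv ℝ V y) := by
      ext v
      simp only [ContinuousLinearMap.comp_add, add_apply, sub_apply,
        ContinuousLinearMap.comp_apply, map_sub, ContinuousLinearMap.id_apply]
      ring
    rw [this]
    calc _ ≤ ‖fderiv ℝ ψ (x + V x) - fderiv ℝ ψ (y + V y)‖ *
            ‖ContinuousLinearMap.id ℝ E + fderiv ℝ V x‖ +
          ‖fderiv ℝ ψ (y + V y)‖ * ‖fderiv ℝ V x - fderiv ℝ V y‖ :=
          (norm_add_le _ _).trans (add_le_add (ContinuousLinearMap.opNorm_comp_le _ _)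
            (ContinuousLinearMap.opNorm_comp_le _ _))
      _ ≤ (A * ((1 + k) * ‖x - y‖)) * (1 + k) + Λ * (C * ‖x - y‖) := by
          gcongr
          · exact (hψ.lip _ _).trans (by gcongr)
          · exact hn x
          · exact hψ.bound _
          · exact hV' x y
      _ = _ := by ring

theorem IsC11.taylor {ψ : E → ℝ} {Λ A : ℝ} (hψ : IsC11 ψ Λ A) (hA : 0 ≤ A) (x v : E) :
    |ψ (x + v) - ψ x - fderiv ℝ ψ x v| ≤ A * ‖v‖ ^ 2 := by
  have h := (convex_closedBall x ‖v‖).norm_image_sub_le_of_norm_fderiv_le' (𝕜 := ℝ)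
    (f := ψ) (φ := fderiv ℝ ψ x) (C := A * ‖v‖) (x := x) (y := x + v)
    (fun z _ => hψ.smooth.differentiable (by simp) z) (fun z hz => by
      refine (hψ.lip z x).trans ?_
      gcongr
      simpa [dist_eq_norm] using hz) (by simp) (by simp)
  simp only [add_sub_cancel_left, Real.norm_eq_abs] at h
  calc _ ≤ _ := h
    _ = _ := by ring

theorem IsC11.lipschitz {ψ : E → ℝ} {Λ A : ℝ} (hψ : IsC11 ψ Λ A) :
    LipschitzWith Λ.toNNReal ψ := by
  have hΛ : 0 ≤ Λ := (norm_nonneg _).trans (hψ.bound 0)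
  refine lipschitzWith_of_nnnorm_fderiv_le (𝕜 := ℝ) (hψ.smooth.differentiable (by simp))
    fun x => ?_
  rw [← NNReal.coe_le_coe, coe_nnnorm, Real.coe_toNNReal _ hΛ]
  exact hψ.bound x

end SmoothFunctions

section Smoothing
variable {E : Type*} [NormedAddCommGroup E] [InnerProductSpace ℝ E] [FiniteDimensional ℝ E]
  [MeasurableSpace E] [BorelSpace E]

/-- Mollification: a smoothing operator on Lipschitz maps which is `ε`-close to the identity,
does not increase sup bounds or moduli of continuity, and controls the derivative. -/
theorem exists_smoothing {ε : ℝ} (hε : 0 < ε) :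
    ∃ S : (E → E) → E → E, ∃ C : ℝ, 0 ≤ C ∧ ∀ (K : ℝ≥0) (f : E → E), LipschitzWith K f →
      ContDiff ℝ ∞ (S f) ∧ (∀ x, ‖S f x - f x‖ ≤ K * ε) ∧
      (∀ x y, ‖fderiv ℝ (S f) x - fderiv ℝ (S f) y‖ ≤ C * K * ‖x - y‖) ∧
      (∀ c : ℝ, (∀ z, ‖f z‖ ≤ c) → ∀ x, ‖S f x‖ ≤ c) ∧
      ∀ (K' : ℝ≥0) (g : E → E), LipschitzWith K' g → ∀ (x y : E) (c : ℝ),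
        (∀ z, ‖f (x - z) - g (y - z)‖ ≤ c) → ‖S f x - S g y‖ ≤ c := by
  let φ : ContDiffBump (0 : E) := ⟨ε / 2, ε, by linarith, by linarith⟩
  let η : E → ℝ := φ.normed volume
  have hη : ContDiff ℝ ∞ η := φ.contDiff_normed
  have hηc : HasCompactSupport η := φ.hasCompactSupport_normed
  have hη0 : ∀ x, 0 ≤ η x := φ.nonneg_normed
  have hη1 : ∫ x, η x = 1 := φ.integral_normed
  have hηi : Integrable η := hη.continuous.integrable_of_hasCompactSupport hηc
  have hηd : Continuous (fderiv ℝ η) := hη.continuous_fderiv (by simp)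
  have hηdi : Integrable (fderiv ℝ η) :=
    hηd.integrable_of_hasCompactSupport (hηc.fderiv ℝ)
  let S : (E → E) → E → E := fun f => η ⋆[ContinuousLinearMap.lsmul ℝ ℝ, volume] f
  have hS : ∀ f x, S f x = ∫ z, η z • f (x - z) := fun f x => rfl
  have hint : ∀ f : E → E, Continuous f → ∀ x, Integrable (fun z => η z • f (x - z)) := by
    intro f hf x
    refine Continuous.integrable_of_hasCompactSupport (by fun_prop) ?_
    exact hηc.smul_right
  refine ⟨S, ∫ z, ‖fderiv ℝ η z‖, integral_nonneg fun _ => norm_nonneg _, ?_⟩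
  intro K f hf
  have hfc := hf.continuous
  refine ⟨?_, ?_, ?_, ?_, ?_⟩
  · exact hηc.contDiff_convolution_left _ hη hfc.locallyIntegrable
  · intro x
    rw [← dist_eq_norm]
    refine φ.dist_normed_convolution_le hfc.aestronglyMeasurable fun y hy => ?_
    refine (hf.dist_le_mul y x).trans ?_
    gcongr
    exact (mem_ball.1 hy).le
  · intro x y
    have hd : ∀ x, fderiv ℝ (S f) x =
        ∫ z, ((ContinuousLinearMap.lsmul ℝ ℝ).precompL E) (fderiv ℝ η z) (f (x - z)) := fun x =>
      (hηc.hasFDerivAt_convolution_left (ContinuousLinearMap.lsmul ℝ ℝ : ℝ →L[ℝ] E →L[ℝ] E)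
        (hη.of_le (by simp)) hfc.locallyIntegrable x).fderiv
    have hi : ∀ x, Integrable (fun z =>
        ((ContinuousLinearMap.lsmul ℝ ℝ : ℝ →L[ℝ] E →L[ℝ] E).precompL E)
          (fderiv ℝ η z) (f (x - z))) := by
      intro x
      refine Continuous.integrable_of_hasCompactSupport (by fun_prop) ?_
      refine (hηc.fderiv ℝ).mono fun z hz => ?_
      contrapose! hz
      simp only [Function.mem_support, not_not] at hz ⊢
      simp [hz]
    rw [hd, hd, ← integral_sub (hi x) (hi y)]
    calc _ ≤ ∫ z, ‖fderiv ℝ η z‖ * (K * ‖x - y‖) := by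
          refine norm_integral_le_of_norm_le (hηdi.norm.mul_const _) (ae_of_all _ fun z => ?_)
          rw [← map_sub]
          have h2 : ‖f (x - z) - f (y - z)‖ ≤ K * ‖x - y‖ := by
            simpa using hf.norm_sub_le (x - z) (y - z)
          refine ContinuousLinearMap.opNorm_le_bound _ (by positivity) fun v => ?_
          rw [ContinuousLinearMap.precompL_apply, ContinuousLinearMap.lsmul_apply, norm_smul]
          calc _ ≤ (‖fderiv ℝ η z‖ * ‖v‖) * (K * ‖x - y‖) := by
                gcongr
                exact ContinuousLinearMap.le_opNorm _ _
            _ = _ := by ring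
      _ = _ := by rw [integral_mul_const]; ring
  · intro c hc x
    rw [hS]
    calc _ ≤ ∫ z, η z * c := by
          refine norm_integral_le_of_norm_le (hηi.mul_const _) (ae_of_all _ fun z => ?_)
          rw [norm_smul, Real.norm_of_nonneg (hη0 z)]
          exact mul_le_mul_of_nonneg_left (hc _) (hη0 z)
      _ = c := by rw [integral_mul_const, hη1, one_mul]
  · intro K' g hg x y c hc
    rw [hS, hS, ← integral_sub (hint f hfc x) (hint g hg.continuous y)]
    calc _ ≤ ∫ z, η z * c := by
          refine norm_integral_le_of_norm_le (hηi.mul_const _) (ae_of_all _ fun z => ?_)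
          rw [← smul_sub, norm_smul, Real.norm_of_nonneg (hη0 z)]
          exact mul_le_mul_of_nonneg_left (hc _) (hη0 z)
      _ = c := by rw [integral_mul_const, hη1, one_mul]

theorem integrable_of_ae_norm_le {F : Type*} [NormedAddCommGroup F] {μ : Measure E}
    [IsFiniteMeasure μ] {R : ℝ} (h : ∀ᵐ x ∂μ, ‖x‖ ≤ R) {f : E → F} (hf : Continuous f) :
    Integrable f μ := by
  obtain ⟨C, hC⟩ := (isCompact_closedBall (0 : E) R).exists_bound_of_continuousOn hf.continuousOn
  refine Integrable.of_bound hf.aestronglyMeasurable C ?_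
  filter_upwards [h] with x hx
  exact hC x (by simpa using hx)

end Smoothing

section Transport
set_option linter.unusedSectionVars false
variable {E : Type*} [NormedAddCommGroup E] [InnerProductSpace ℝ E] [FiniteDimensional ℝ E]
  [MeasurableSpace E] [BorelSpace E]

/-- A curve of uniformly compactly supported probability measures solving the linear continuity
equation on `[0,T]` for a bounded, globally Lipschitz, measurable in time vector field. -/
structure IsTransport (T R B : ℝ) (L : ℝ≥0) (w : ℝ → E → E) (μ : ℝ → Measure E) : Prop where
  prob : ∀ s, IsProbabilityMeasure (μ s)
  supp : ∀ s, ∀ᵐ x ∂μ s, ‖x‖ ≤ R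
  cont : ∀ θ > 0, ∃ δ > 0, ∀ s t, |s - t| < δ → ∀ (K : ℝ≥0) (f : E → ℝ), LipschitzWith K f →
    |(∫ x, f x ∂μ s) - ∫ x, f x ∂μ t| ≤ K * θ
  bound : ∀ s x, ‖w s x‖ ≤ B
  lip : ∀ s, LipschitzWith L (w s)
  meas : ∀ x, Measurable fun s => w s x
  weak : ∀ (ψ : E → ℝ) (Λ A : ℝ), 0 ≤ A → IsC11 ψ Λ A → ∀ t ∈ Icc (0 : ℝ) T,
    ∫ x, ψ x ∂μ t = (∫ x, ψ x ∂μ 0) + ∫ s in (0 : ℝ)..t, ∫ x, fderiv ℝ ψ x (w s x) ∂μ s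

/-- The displacement generated over the time interval `[a,b]` by the field frozen in space. -/
def timeIntegral (w : ℝ → E → E) (a b : ℝ) (x : E) : E := ∫ s in a..b, w s x

variable {T R B : ℝ} {L : ℝ≥0} {w : ℝ → E → E} {μ : ℝ → Measure E}

namespace IsTransport

theorem intervalIntegrable (h : IsTransport T R B L w μ) (x : E) (a b : ℝ) :
    IntervalIntegrable (fun s => w s x) volume a b :=
  (intervalIntegrable_const (c := B)).mono_fun (h.meas x).aestronglyMeasurable
    (ae_of_all _ fun s => (h.bound s x).trans (le_abs_self B))

theorem norm_timeIntegral_le (h : IsTransport T R B L w μ) {a b : ℝ} (hab : a ≤ b) (x : E) :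
    ‖timeIntegral w a b x‖ ≤ B * (b - a) := by
  have := intervalIntegral.norm_integral_le_of_norm_le_const (a := a) (b := b) (C := B)
    (f := fun s => w s x) fun s _ => h.bound s x
  rwa [abs_of_nonneg (sub_nonneg.2 hab)] at this

theorem lipschitz_timeIntegral (h : IsTransport T R B L w μ) {a b : ℝ} (hab : a ≤ b) :
    LipschitzWith (L * (b - a).toNNReal) (timeIntegral w a b) := by
  refine LipschitzWith.of_dist_le_mul fun x y => ?_
  rw [dist_eq_norm, timeIntegral, timeIntegral,
    ← intervalIntegral.integral_sub (h.intervalIntegrable x a b) (h.intervalIntegrable y a b)]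
  refine (intervalIntegral.norm_integral_le_of_norm_le_const (C := L * dist x y)
    fun s _ => by rw [← dist_eq_norm]; exact (h.lip s).dist_le_mul x y).trans ?_
  rw [abs_of_nonneg (sub_nonneg.2 hab), NNReal.coe_mul, Real.coe_toNNReal _ (sub_nonneg.2 hab)]
  exact le_of_eq (by ring)

theorem measurable_integral (h : IsTransport T R B L w μ) {g : ℝ → E → ℝ} {K : ℝ≥0}
    (hg : ∀ s, LipschitzWith K (g s)) (hgm : ∀ x, Measurable fun s => g s x) :
    Measurable fun s => ∫ x, g s x ∂μ s := by
  have hjoint : StronglyMeasurable (Function.uncurry g) := by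
    have := stronglyMeasurable_uncurry_of_continuous_of_stronglyMeasurable (u := fun x s => g s x)
      (fun s => (hg s).continuous) (fun x => (hgm x).stronglyMeasurable)
    exact this.comp_measurable measurable_swap
  let F : ℕ → ℝ → ℝ := fun n s => ∫ x, g s x ∂μ (⌊s * (n + 1)⌋ / (n + 1))
  refine measurable_of_tendsto_metrizable (f := F) (fun n => ?_) ?_
  · have h1 : Measurable fun p : ℤ × ℝ => ∫ x, g p.2 x ∂μ (p.1 / (n + 1)) := by
      refine measurable_from_prod_countable_right fun k => ?_
      have := h.prob ((k : ℝ) / (n + 1))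
      exact (hjoint.integral_prod_right (ν := μ ((k : ℝ) / (n + 1)))).measurable
    exact h1.comp (((measurable_id.mul_const _).floor).prodMk measurable_id)
  · rw [tendsto_pi_nhds]
    intro s
    rw [Metric.tendsto_atTop]
    intro θ hθ
    obtain ⟨δ, hδ, H⟩ := h.cont (θ / (K + 1)) (by positivity)
    obtain ⟨N, hN⟩ := exists_nat_one_div_lt hδ
    refine ⟨N, fun n hn => ?_⟩
    have hn0 : (0 : ℝ) < n + 1 := by positivity
    have hs : |(⌊s * (n + 1)⌋ : ℝ) / (n + 1) - s| < δ := by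
      have e : (⌊s * (n + 1)⌋ : ℝ) / (n + 1) - s = -(Int.fract (s * (n + 1)) / (n + 1)) := by
        rw [Int.fract]; field_simp; ring
      rw [e, abs_neg, abs_of_nonneg (div_nonneg (Int.fract_nonneg _) hn0.le)]
      refine lt_of_le_of_lt ?_ hN
      have : (N : ℝ) ≤ n := by exact_mod_cast hn
      gcongr
      exact (Int.fract_lt_one _).le
    rw [Real.dist_eq]
    refine (H _ _ hs K (g s) (hg s)).trans_lt ?_
    rw [mul_div_assoc', div_lt_iff₀ (by positivity)]
    nlinarith

theorem lipschitz_fderiv_apply (h : IsTransport T R B L w μ) {ψ : E → ℝ} {Λ A : ℝ}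
    (hψ : IsC11 ψ Λ A) (hA : 0 ≤ A) (s : ℝ) :
    LipschitzWith (A * B + Λ * L).toNNReal fun x => fderiv ℝ ψ x (w s x) := by
  have hΛ : 0 ≤ Λ := (norm_nonneg _).trans (hψ.bound 0)
  have hB : 0 ≤ B := (norm_nonneg _).trans (h.bound 0 0)
  refine LipschitzWith.of_dist_le_mul fun x y => ?_
  rw [Real.coe_toNNReal _ (by positivity), dist_eq_norm, dist_eq_norm]
  have : fderiv ℝ ψ x (w s x) - fderiv ℝ ψ y (w s y) =
      (fderiv ℝ ψ x - fderiv ℝ ψ y) (w s x) + fderiv ℝ ψ y (w s x - w s y) := by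
    simp only [sub_apply, map_sub]; ring
  rw [this]
  calc _ ≤ ‖fderiv ℝ ψ x - fderiv ℝ ψ y‖ * ‖w s x‖ + ‖fderiv ℝ ψ y‖ * ‖w s x - w s y‖ :=
        (norm_add_le _ _).trans (add_le_add (ContinuousLinearMap.le_opNorm _ _)
          (ContinuousLinearMap.le_opNorm _ _))
    _ ≤ (A * ‖x - y‖) * B + Λ * (L * ‖x - y‖) := by
        gcongr
        · exact hψ.lip x y
        · exact h.bound s x
        · exact hψ.bound y
        · exact (h.lip s).norm_sub_le x y
    _ = _ := by ring

theorem norm_fderiv_apply_le (h : IsTransport T R B L w μ) {ψ : E → ℝ} {Λ A : ℝ}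
    (hψ : IsC11 ψ Λ A) (s : ℝ) (x : E) : ‖fderiv ℝ ψ x (w s x)‖ ≤ Λ * B :=
  (ContinuousLinearMap.le_opNorm _ _).trans (mul_le_mul (hψ.bound x) (h.bound s x)
    (norm_nonneg _) ((norm_nonneg _).trans (hψ.bound 0)))

theorem measurable_fderiv_apply (h : IsTransport T R B L w μ) (ψ : E → ℝ) (x : E) :
    Measurable fun s => fderiv ℝ ψ x (w s x) :=
  (fderiv ℝ ψ x).measurable.comp (h.meas x)

theorem weak_sub (h : IsTransport T R B L w μ) {ψ : E → ℝ} {Λ A : ℝ} (hA : 0 ≤ A)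
    (hψ : IsC11 ψ Λ A) {a b : ℝ} (ha : 0 ≤ a) (hab : a ≤ b) (hb : b ≤ T) :
    (∫ x, ψ x ∂μ b) - ∫ x, ψ x ∂μ a = ∫ s in a..b, ∫ x, fderiv ℝ ψ x (w s x) ∂μ s := by
  have hi : ∀ a b, IntervalIntegrable (fun s => ∫ x, fderiv ℝ ψ x (w s x) ∂μ s) volume a b := by
    intro a b
    refine (intervalIntegrable_const (c := Λ * B)).mono_fun
      (h.measurable_integral (h.lipschitz_fderiv_apply hψ hA)
        (h.measurable_fderiv_apply ψ)).aestronglyMeasurable (ae_of_all _ fun s => ?_)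
    have := h.prob s
    refine le_trans ?_ (le_abs_self _)
    simpa using norm_integral_le_of_norm_le_const (μ := μ s)
      (ae_of_all _ (h.norm_fderiv_apply_le hψ s))
  rw [h.weak ψ Λ A hA hψ b ⟨ha.trans hab, hb⟩, h.weak ψ Λ A hA hψ a ⟨ha, hab.trans hb⟩,
    ← intervalIntegral.integral_interval_sub_left (hi 0 b) (hi 0 a)]
  ring

/-- Weak consistency of one smoothed explicit Euler step. -/
theorem step_error (h : IsTransport T R B L w μ) {ψ : E → ℝ} {Λ A : ℝ} (hA : 0 ≤ A)
    (hψ : IsC11 ψ Λ A) {a b : ℝ} (ha : 0 ≤ a) (hab : a ≤ b) (hb : b ≤ T) {V : E → E}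
    (hV : Continuous V) (hVB : ∀ x, ‖V x‖ ≤ B * (b - a)) {κ : ℝ}
    (hκ : ∀ x, ‖V x - timeIntegral w a b x‖ ≤ κ) {θ : ℝ}
    (hθ : ∀ s ∈ Icc a b, ∀ (K : ℝ≥0) (f : E → ℝ), LipschitzWith K f →
      |(∫ x, f x ∂μ s) - ∫ x, f x ∂μ a| ≤ K * θ) :
    |(∫ x, ψ x ∂μ b) - ∫ x, ψ (x + V x) ∂μ a| ≤
      (b - a) * ((A * B + Λ * L) * θ) + Λ * κ + A * (B * (b - a)) ^ 2 := by
  have hΛ : 0 ≤ Λ := (norm_nonneg _).trans (hψ.bound 0)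
  have hB : 0 ≤ B := (norm_nonneg _).trans (h.bound 0 0)
  have hprob := h.prob
  have hψc : Continuous ψ := hψ.smooth.continuous
  have hψd : Continuous (fderiv ℝ ψ) := hψ.smooth.continuous_fderiv (by simp)
  have hWc : Continuous (timeIntegral w a b) := (h.lipschitz_timeIntegral hab).continuous
  have hint : ∀ {f : E → ℝ}, Continuous f → Integrable f (μ a) := fun hf =>
    integrable_of_ae_norm_le (h.supp a) hf
  have hjoint : StronglyMeasurable (Function.uncurry fun s x => fderiv ℝ ψ x (w s x)) := by
    have := stronglyMeasurable_uncurry_of_continuous_of_stronglyMeasurable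
      (u := fun x s => fderiv ℝ ψ x (w s x))
      (fun s => (h.lipschitz_fderiv_apply hψ hA s).continuous)
      (fun x => (h.measurable_fderiv_apply ψ x).stronglyMeasurable)
    exact this.comp_measurable measurable_swap
  have hfub : ∫ x, fderiv ℝ ψ x (timeIntegral w a b x) ∂μ a =
      ∫ s in a..b, ∫ x, fderiv ℝ ψ x (w s x) ∂μ a := by
    simp_rw [timeIntegral, ← ContinuousLinearMap.intervalIntegral_comp_comm _
      (h.intervalIntegrable _ a b), intervalIntegral.integral_of_le hab]
    rw [integral_integral_swap]
    refine Integrable.of_bound (hjoint.comp_measurable measurable_swap).aestronglyMeasurable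
      (Λ * B) (ae_of_all _ fun p => h.norm_fderiv_apply_le hψ p.2 p.1)
  have hm : ∀ {ν : ℝ → Measure E}, Measurable (fun s => ∫ x, fderiv ℝ ψ x (w s x) ∂ν s) →
      (∀ s, IsProbabilityMeasure (ν s)) →
      IntervalIntegrable (fun s => ∫ x, fderiv ℝ ψ x (w s x) ∂ν s) volume a b := by
    intro ν hν hp
    refine (intervalIntegrable_const (c := Λ * B)).mono_fun hν.aestronglyMeasurable
      (ae_of_all _ fun s => ?_)
    have := hp s
    refine le_trans ?_ (le_abs_self _)
    simpa using norm_integral_le_of_norm_le_const (μ := ν s)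
      (ae_of_all _ (h.norm_fderiv_apply_le hψ s))
  have h1 : |((∫ x, ψ x ∂μ b) - ∫ x, ψ x ∂μ a) - ∫ x, fderiv ℝ ψ x (timeIntegral w a b x) ∂μ a| ≤
      (b - a) * ((A * B + Λ * L) * θ) := by
    rw [h.weak_sub hA hψ ha hab hb, hfub, ← intervalIntegral.integral_sub
      (hm (h.measurable_integral (h.lipschitz_fderiv_apply hψ hA)
        (h.measurable_fderiv_apply ψ)) hprob)
      (hm (ν := fun _ => μ a) hjoint.integral_prod_right.measurable fun _ => hprob a)]
    have := intervalIntegral.norm_integral_le_of_norm_le_const (a := a) (b := b)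
      (C := (A * B + Λ * L) * θ)
      (f := fun s => (∫ x, fderiv ℝ ψ x (w s x) ∂μ s) - ∫ x, fderiv ℝ ψ x (w s x) ∂μ a)
      fun s hs => by
        rw [uIoc_of_le hab] at hs
        have := hθ s ⟨hs.1.le, hs.2⟩ _ _ (h.lipschitz_fderiv_apply hψ hA s)
        rwa [Real.coe_toNNReal _ (by positivity)] at this
    rw [abs_of_nonneg (sub_nonneg.2 hab), Real.norm_eq_abs] at this
    linarith
  have h2 : |∫ x, (fderiv ℝ ψ x (timeIntegral w a b x) - fderiv ℝ ψ x (V x)) ∂μ a| ≤ Λ * κ := by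
    rw [← Real.norm_eq_abs]
    refine (norm_integral_le_of_norm_le_const (C := Λ * κ) (ae_of_all _ fun x => ?_)).trans
      (by simp)
    rw [← map_sub]
    refine (ContinuousLinearMap.le_opNorm _ _).trans
      (mul_le_mul (hψ.bound x) ?_ (norm_nonneg _) hΛ)
    rw [norm_sub_rev]
    exact hκ x
  have h3 : |∫ x, (ψ (x + V x) - ψ x - fderiv ℝ ψ x (V x)) ∂μ a| ≤ A * (B * (b - a)) ^ 2 := by
    rw [← Real.norm_eq_abs]
    refine (norm_integral_le_of_norm_le_const (C := A * (B * (b - a)) ^ 2)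
      (ae_of_all _ fun x => ?_)).trans (by simp)
    refine (hψ.taylor hA x (V x)).trans ?_
    gcongr
    exact hVB x
  rw [integral_sub (hint (hψd.clm_apply hWc)) (hint (hψd.clm_apply hV))] at h2
  have hψV : Continuous fun x => ψ (x + V x) := hψc.comp (continuous_id.add hV)
  rw [integral_sub (hint (f := fun x => ψ (x + V x) - ψ x) (hψV.sub hψc))
    (hint (hψd.clm_apply hV)), integral_sub (hint hψV) (hint hψc)] at h3
  rw [abs_le] at *
  constructor <;> linarith [h1.1, h1.2, h2.1, h2.2, h3.1, h3.2]

end IsTransport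
end Transport

section Euler
set_option linter.unusedSectionVars false
variable {E : Type*} [NormedAddCommGroup E] [InnerProductSpace ℝ E] [FiniteDimensional ℝ E]
  [MeasurableSpace E] [BorelSpace E]

/-- The properties of a smoothing operator at scale `ε` provided by `exists_smoothing`. -/
def IsSmoothing (ε C : ℝ) (S : (E → E) → E → E) : Prop :=
  ∀ (K : ℝ≥0) (f : E → E), LipschitzWith K f →
    ContDiff ℝ ∞ (S f) ∧ (∀ x, ‖S f x - f x‖ ≤ K * ε) ∧
    (∀ x y, ‖fderiv ℝ (S f) x - fderiv ℝ (S f) y‖ ≤ C * K * ‖x - y‖) ∧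
    (∀ c : ℝ, (∀ z, ‖f z‖ ≤ c) → ∀ x, ‖S f x‖ ≤ c) ∧
    ∀ (K' : ℝ≥0) (g : E → E), LipschitzWith K' g → ∀ (x y : E) (c : ℝ),
      (∀ z, ‖f (x - z) - g (y - z)‖ ≤ c) → ‖S f x - S g y‖ ≤ c

/-- The smoothed displacement over the `j`-th time interval of length `h`. -/
def eulerStep (S : (E → E) → E → E) (w : ℝ → E → E) (h : ℝ) (j : ℕ) : E → E :=
  S (timeIntegral w (j * h) ((j + 1 : ℕ) * h))

/-- The smoothed explicit Euler scheme with step `h`. -/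
def eulerMap (S : (E → E) → E → E) (w : ℝ → E → E) (h : ℝ) : ℕ → E → E
  | 0 => id
  | j + 1 => fun x => eulerMap S w h j x + eulerStep S w h j (eulerMap S w h j x)

variable {T R B : ℝ} {L : ℝ≥0} {w : ℝ → E → E} {μ : ℝ → Measure E}
variable {ε C h : ℝ} {S : (E → E) → E → E}

namespace IsTransport

theorem lipschitz_timeIntegral_step (hw : IsTransport T R B L w μ) (hh : 0 ≤ h) (j : ℕ) :
    LipschitzWith (L * h.toNNReal) (timeIntegral w (j * h) ((j + 1 : ℕ) * h)) := by
  have := hw.lipschitz_timeIntegral (a := j * h) (b := (j + 1 : ℕ) * h) (by push_cast; linarith)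
  rwa [show ((j + 1 : ℕ) : ℝ) * h - j * h = h by push_cast; ring] at this

theorem lipschitz_eulerStep (hw : IsTransport T R B L w μ) (hS : IsSmoothing ε C S) (hh : 0 ≤ h)
    (j : ℕ) : LipschitzWith (L * h.toNNReal) (eulerStep S w h j) := by
  have hl := hw.lipschitz_timeIntegral_step hh j
  refine LipschitzWith.of_dist_le_mul fun x y => ?_
  rw [dist_eq_norm]
  refine (hS _ _ hl).2.2.2.2 _ _ hl x y _ fun z => ?_
  simpa [dist_eq_norm] using hl.norm_sub_le (x - z) (y - z)

theorem norm_eulerStep_le (hw : IsTransport T R B L w μ) (hS : IsSmoothing ε C S) (hh : 0 ≤ h)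
    (j : ℕ) (x : E) : ‖eulerStep S w h j x‖ ≤ B * h := by
  refine (hS _ _ (hw.lipschitz_timeIntegral_step hh j)).2.2.2.1 _ (fun z => ?_) x
  have := hw.norm_timeIntegral_le (a := j * h) (b := (j + 1 : ℕ) * h) (by push_cast; linarith) z
  rwa [show ((j + 1 : ℕ) : ℝ) * h - j * h = h by push_cast; ring] at this

theorem norm_eulerMap_le (hw : IsTransport T R B L w μ) (hS : IsSmoothing ε C S) (hh : 0 ≤ h)
    (j : ℕ) (x : E) : ‖eulerMap S w h j x‖ ≤ ‖x‖ + B * (j * h) := by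
  induction j with
  | zero => simp [eulerMap]
  | succ j ih =>
    have := hw.norm_eulerStep_le hS hh j (eulerMap S w h j x)
    refine (norm_add_le _ _).trans ?_
    push_cast
    linarith

theorem lipschitz_eulerMap (hw : IsTransport T R B L w μ) (hS : IsSmoothing ε C S) (hh : 0 ≤ h)
    (j : ℕ) : LipschitzWith ((1 + L * h.toNNReal) ^ j) (eulerMap S w h j) := by
  induction j with
  | zero => simpa [eulerMap] using LipschitzWith.id
  | succ j ih =>
    have h1 : LipschitzWith (1 + L * h.toNNReal) fun y => y + eulerStep S w h j y :=
      LipschitzWith.id.add (hw.lipschitz_eulerStep hS hh j)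
    rw [pow_succ']
    exact h1.comp ih

/-- Weak consistency of the smoothed Euler scheme. -/
theorem eulerMap_error (hw : IsTransport T R B L w μ) (hS : IsSmoothing ε C S) (hC : 0 ≤ C)
    (hε : 0 ≤ ε) (hh : 0 ≤ h) {θ : ℝ} (hθ0 : 0 ≤ θ)
    (hθ : ∀ s t, |s - t| ≤ h → ∀ (K : ℝ≥0) (f : E → ℝ), LipschitzWith K f →
      |(∫ x, f x ∂μ s) - ∫ x, f x ∂μ t| ≤ K * θ) (j : ℕ) :
    j * h ≤ T → ∀ {ψ : E → ℝ} {Λ A : ℝ}, 0 ≤ A → IsC11 ψ Λ A →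
      |(∫ x, ψ x ∂μ (j * h)) - ∫ x, ψ (eulerMap S w h j x) ∂μ 0| ≤
        j * h * ((A + Λ * C * L * (j * h)) * (1 + L * h) ^ (2 * j) * (B * θ + B ^ 2 * h) +
          Λ * (1 + L * h) ^ j * (L * θ + L * ε)) := by
  have hB : 0 ≤ B := (norm_nonneg _).trans (hw.bound 0 0)
  induction j with
  | zero => intro _ ψ Λ A _ _; simp [eulerMap]
  | succ j ih =>
    intro hj ψ Λ A hA hψ
    have hΛ : 0 ≤ Λ := (norm_nonneg _).trans (hψ.bound 0)
    have hl := hw.lipschitz_timeIntegral_step hh j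
    obtain ⟨hs1, hs2, hs3, -, -⟩ := hS _ _ hl
    have hk : ((L * h.toNNReal : ℝ≥0) : ℝ) = L * h := by simp [hh]
    rw [hk] at hs2 hs3
    have hjj : ((j + 1 : ℕ) : ℝ) * h - j * h = h := by push_cast; ring
    have hstep := hw.step_error hA hψ (a := j * h) (b := (j + 1 : ℕ) * h) (by positivity)
      (by push_cast; linarith) hj (V := eulerStep S w h j) hs1.continuous
      (by rw [hjj]; exact hw.norm_eulerStep_le hS hh j) hs2 (θ := θ) (fun s hs => by
        refine hθ _ _ ?_
        rw [abs_of_nonneg (by linarith [hs.1])]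
        linarith [hs.2])
    rw [hjj] at hstep
    have hψ' := hψ.comp_id_add hA (V := eulerStep S w h j) hs1 (hw.lipschitz_eulerStep hS hh j) hs3
    rw [hk] at hψ'
    have hrec := ih (by push_cast at hj; linarith) (by positivity) hψ'
    have htri : |(∫ x, ψ x ∂μ ((j + 1 : ℕ) * h)) - ∫ x, ψ (eulerMap S w h (j + 1) x) ∂μ 0| ≤ _ :=
      (abs_sub_le _ (∫ x, ψ (x + eulerStep S w h j x) ∂μ (j * h)) _).trans (add_le_add hstep hrec)
    refine htri.trans ?_
    set a : ℝ := 1 + L * h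
    set n : ℝ := (j : ℝ)
    have ha : 1 ≤ a := by simp only [a]; have : 0 ≤ L * h := by positivity
                          linarith
    have hn : 0 ≤ n := Nat.cast_nonneg j
    have hLh : (0 : ℝ) ≤ L * h := by positivity
    push_cast
    have p1 : 1 ≤ a ^ (j + 1) := one_le_pow₀ ha
    have p2 : 1 ≤ a ^ (2 * (j + 1)) := one_le_pow₀ ha
    have q1 : (A * a ^ 2 + Λ * (C * (L * h)) + Λ * a * C * L * (n * h)) * a ^ (2 * j) ≤
        (A + Λ * C * L * ((n + 1) * h)) * a ^ (2 * (j + 1)) := by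
      have e0 : 0 ≤ a ^ (2 * j) := by positivity
      have e1 : (1 : ℝ) ≤ a ^ 2 := one_le_pow₀ ha
      have e2 : a ≤ a ^ 2 := by nlinarith
      have e3 : 0 ≤ Λ * (C * (L * h)) := by positivity
      have e4 : 0 ≤ Λ * C * L * (n * h) := by positivity
      have e5 : A * a ^ 2 + Λ * (C * (L * h)) + Λ * a * C * L * (n * h) ≤
          (A + Λ * C * L * ((n + 1) * h)) * a ^ 2 := by
        nlinarith [mul_le_mul_of_nonneg_left e1 e3, mul_le_mul_of_nonneg_left e2 e4]
      calc _ ≤ ((A + Λ * C * L * ((n + 1) * h)) * a ^ 2) * a ^ (2 * j) :=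
            mul_le_mul_of_nonneg_right e5 e0
        _ = _ := by ring
    have q2 : A ≤ (A + Λ * C * L * ((n + 1) * h)) * a ^ (2 * (j + 1)) := by
      have e3 : 0 ≤ Λ * C * L * ((n + 1) * h) := by positivity
      nlinarith [mul_le_mul_of_nonneg_left p2 (add_nonneg hA e3)]
    have q3 : Λ ≤ Λ * a ^ (j + 1) := le_mul_of_one_le_right hΛ p1
    have f1 : 0 ≤ B * θ + B ^ 2 * h := by positivity
    have f2 : 0 ≤ L * θ + L * ε := by positivity
    set P := (A + Λ * C * L * ((n + 1) * h)) * a ^ (2 * (j + 1))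
    calc _ ≤ h * (A * (B * θ + B ^ 2 * h) + Λ * (L * θ + L * ε)) +
          n * h * ((A * a ^ 2 + Λ * (C * (L * h)) + Λ * a * C * L * (n * h)) * a ^ (2 * j) *
            (B * θ + B ^ 2 * h) + Λ * a ^ (j + 1) * (L * θ + L * ε)) := by
          apply le_of_eq; ring
      _ ≤ h * (P * (B * θ + B ^ 2 * h) + Λ * a ^ (j + 1) * (L * θ + L * ε)) +
          n * h * (P * (B * θ + B ^ 2 * h) + Λ * a ^ (j + 1) * (L * θ + L * ε)) := by
          gcongr
      _ = _ := by ring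

/-- The Euler scheme approximates the solution in the weak sense, with a rate depending on the
test function only through its `C^{1,1}` bounds. -/
theorem exists_eulerMap_error_le (hw : IsTransport T R B L w μ) (hS : IsSmoothing ε C S)
    (hC : 0 ≤ C) (hε : 0 < ε) {t : ℝ} (ht : t ∈ Icc 0 T) :
    ∃ N₀ : ℕ, ∀ N : ℕ, N₀ ≤ N → ∀ {ψ : E → ℝ} {Λ A : ℝ}, 0 ≤ A → IsC11 ψ Λ A →
      |(∫ x, ψ x ∂μ t) - ∫ x, ψ (eulerMap S w (t / (N + 1 : ℕ)) (N + 1) x) ∂μ 0| ≤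
        T * Real.exp (2 * L * T) * (A + Λ * (1 + 2 * L)) * ε := by
  have hB : 0 ≤ B := (norm_nonneg _).trans (hw.bound 0 0)
  have hT : 0 ≤ T := ht.1.trans ht.2
  set M : ℝ := (1 + C * L * T) * (2 * (B + B ^ 2) + 1) with hM
  have hM0 : 0 < M := by positivity
  set θ : ℝ := min ε (ε / M)
  have hθ0 : 0 < θ := by positivity
  obtain ⟨δ, hδ, H⟩ := hw.cont θ hθ0
  have hδ' : 0 < min δ θ := by positivity
  obtain ⟨N₀, hN₀⟩ := exists_nat_gt (T / min δ θ)
  refine ⟨N₀, fun N hN ψ Λ A hA hψ => ?_⟩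
  have hΛ : 0 ≤ Λ := (norm_nonneg _).trans (hψ.bound 0)
  have hN0 : (0 : ℝ) < (N + 1 : ℕ) := by positivity
  set h : ℝ := t / (N + 1 : ℕ) with hh
  have hh0 : 0 ≤ h := div_nonneg ht.1 hN0.le
  have hNh : ((N + 1 : ℕ) : ℝ) * h = t := by rw [hh]; field_simp
  have hsmall : h < min δ θ := by
    rw [hh, div_lt_iff₀ hN0]
    rw [div_lt_iff₀ hδ'] at hN₀
    have : (N₀ : ℝ) ≤ (N + 1 : ℕ) := by exact_mod_cast hN.trans (Nat.le_succ N)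
    nlinarith [ht.2]
  have key := hw.eulerMap_error hS hC hε.le hh0 hθ0.le
    (fun s t hst => H s t (hst.trans_lt (hsmall.trans_le (min_le_left _ _)))) (N + 1)
    (hNh.trans_le ht.2) hA hψ
  rw [hNh] at key
  refine key.trans ?_
  have hexp : ∀ n : ℕ, n * h ≤ 2 * t → (1 + L * h) ^ n ≤ Real.exp (2 * L * T) := by
    intro n hn
    calc (1 + L * h) ^ n ≤ Real.exp (L * h) ^ n := by
          gcongr
          linarith [Real.add_one_le_exp (L * h)]
      _ = Real.exp (L * (n * h)) := by rw [← Real.exp_nat_mul]; ring_nf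
      _ ≤ _ := by
          rw [Real.exp_le_exp]
          have : L * (n * h) ≤ L * (2 * T) :=
            mul_le_mul_of_nonneg_left (hn.trans (by linarith [ht.2])) L.2
          linarith
  have e1 := hexp (N + 1) (by rw [hNh]; linarith [ht.1])
  have e2 := hexp (2 * (N + 1)) (by push_cast at hNh ⊢; linarith)
  have hθε : θ ≤ ε := min_le_left _ _
  have hθM : θ * M ≤ ε := (le_div_iff₀ hM0).1 (min_le_right _ _)
  have hhθ : h ≤ θ := hsmall.le.trans (min_le_right _ _)
  have g1 : (A + Λ * C * L * t) * (B * θ + B ^ 2 * h) ≤ (A + Λ) * ε := by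
    calc _ ≤ ((A + Λ) * (1 + C * L * T)) * (B * θ + B ^ 2 * θ) := by
          gcongr
          have : Λ * C * L * t ≤ Λ * C * L * T := by gcongr; exact ht.2
          have : 0 ≤ A * (C * L * T) := by positivity
          nlinarith
      _ ≤ (A + Λ) * (θ * M) := by
          rw [hM]
          have : 0 ≤ (A + Λ) * (1 + C * L * T) * θ * (B + B ^ 2 + 1) := by positivity
          nlinarith
      _ ≤ _ := by gcongr
  calc _ ≤ t * ((A + Λ * C * L * t) * Real.exp (2 * L * T) * (B * θ + B ^ 2 * h) +
        Λ * Real.exp (2 * L * T) * (L * θ + L * ε)) := by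
        have := ht.1
        gcongr
    _ = t * (Real.exp (2 * L * T) * ((A + Λ * C * L * t) * (B * θ + B ^ 2 * h) +
        Λ * (L * θ + L * ε))) := by ring
    _ ≤ T * (Real.exp (2 * L * T) * ((A + Λ) * ε + Λ * (L * ε + L * ε))) := by
        have : 0 ≤ B * θ + B ^ 2 * h := by positivity
        have := ht.1
        gcongr
        exact ht.2
    _ = _ := by ring

end IsTransport
end Euler

section FlowMap
set_option linter.unusedSectionVars false
variable {E : Type*} [NormedAddCommGroup E] [InnerProductSpace ℝ E] [FiniteDimensional ℝ E]
  [MeasurableSpace E] [BorelSpace E]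

theorem isC11_comp_inner {g : ℝ → ℝ} (hg : ContDiff ℝ ∞ g) (h1 : ∀ r, |deriv g r| ≤ 1)
    (h2 : LipschitzWith 1 (deriv g)) (v : E) :
    IsC11 (fun x => g ⟪v, x⟫) ‖v‖ (‖v‖ ^ 2) := by
  have hd : ∀ x, fderiv ℝ (fun x => g ⟪v, x⟫) x = deriv g ⟪v, x⟫ • innerSL ℝ v := fun x =>
    ((hg.differentiable (by simp) _).hasDerivAt.comp_hasFDerivAt x
      (innerSL ℝ v).hasFDerivAt).fderiv
  refine ⟨hg.comp (innerSL ℝ v).contDiff, fun x => ?_, fun x y => ?_⟩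
  · rw [hd, norm_smul, innerSL_apply_norm]
    exact mul_le_of_le_one_left (norm_nonneg _) (h1 _)
  · rw [hd, hd, ← sub_smul, norm_smul, innerSL_apply_norm]
    have := h2.norm_sub_le ⟪v, x⟫ ⟪v, y⟫
    rw [← inner_sub_right, NNReal.coe_one, one_mul] at this
    calc _ ≤ (‖v‖ * ‖x - y‖) * ‖v‖ := by
          gcongr
          exact this.trans (norm_inner_le_norm _ _)
      _ = _ := by ring

/-- Measures agreeing on smooth functions with bounded and Lipschitz derivative are equal. -/
theorem measure_ext_of_isC11 {μ ν : Measure E} [IsProbabilityMeasure μ] [IsProbabilityMeasure ν]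
    (h : ∀ (ψ : E → ℝ) (Λ A : ℝ), 0 ≤ A → IsC11 ψ Λ A → ∫ x, ψ x ∂μ = ∫ x, ψ x ∂ν) : μ = ν := by
  refine Measure.ext_of_charFun ?_
  ext v
  have hcos : IsC11 (fun x => Real.cos ⟪v, x⟫) ‖v‖ (‖v‖ ^ 2) :=
    isC11_comp_inner Real.contDiff_cos (fun r => by
      rw [Real.deriv_cos, abs_neg]; exact Real.abs_sin_le_one r) (by
      rw [Real.deriv_cos']; exact Real.lipschitzWith_sin.neg) v
  have hsin : IsC11 (fun x => Real.sin ⟪v, x⟫) ‖v‖ (‖v‖ ^ 2) :=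
    isC11_comp_inner Real.contDiff_sin (fun r => by
      rw [Real.deriv_sin]; exact Real.abs_cos_le_one r) (by
      rw [Real.deriv_sin]; exact Real.lipschitzWith_cos) v
  have key : ∀ ρ : Measure E, IsProbabilityMeasure ρ → charFun ρ v =
      ((∫ x, Real.cos ⟪v, x⟫ ∂ρ : ℝ) : ℂ) + ((∫ x, Real.sin ⟪v, x⟫ ∂ρ : ℝ) : ℂ) * Complex.I := by
    intro ρ _
    have i1 : Integrable (fun x => ((Real.cos ⟪v, x⟫ : ℝ) : ℂ)) ρ :=
      Integrable.ofReal (Integrable.of_bound hcos.smooth.continuous.aestronglyMeasurable 1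
        (ae_of_all _ fun x => Real.abs_cos_le_one _))
    have i2 : Integrable (fun x => ((Real.sin ⟪v, x⟫ : ℝ) : ℂ)) ρ :=
      Integrable.ofReal (Integrable.of_bound hsin.smooth.continuous.aestronglyMeasurable 1
        (ae_of_all _ fun x => Real.abs_sin_le_one _))
    rw [charFun_apply, ← integral_complex_ofReal, ← integral_complex_ofReal,
      ← integral_mul_const, ← integral_add i1 (i2.mul_const _)]
    refine integral_congr_ae (ae_of_all _ fun x => ?_)
    simp only
    rw [real_inner_comm, Complex.exp_mul_I, Complex.ofReal_cos, Complex.ofReal_sin]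
  rw [key μ inferInstance, key ν inferInstance, h _ _ _ (by positivity) hcos,
    h _ _ _ (by positivity) hsin]

/-- A sequence of equi-Lipschitz, locally bounded maps has a pointwise limit along an ultrafilter,
and this limit transports the measure to the weak limit of the images. -/
theorem exists_limit_map {X : ℕ → E → E} {K : ℝ≥0} (hX : ∀ n, LipschitzWith K (X n)) {M R : ℝ}
    (hb : ∀ n x, ‖X n x‖ ≤ ‖x‖ + M) {μ ν : Measure E} [IsProbabilityMeasure μ]
    [IsProbabilityMeasure ν] (hν : ∀ᵐ x ∂ν, ‖x‖ ≤ R)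
    (hlim : ∀ (ψ : E → ℝ) (Λ A : ℝ), 0 ≤ A → IsC11 ψ Λ A →
      Tendsto (fun n => ∫ x, ψ (X n x) ∂ν) atTop (𝓝 (∫ x, ψ x ∂μ))) :
    ∃ Y : E → E, LipschitzWith K Y ∧ ν.map Y = μ ∧
      ∀ x, Tendsto (fun n => X n x) (hyperfilter ℕ : Filter ℕ) (𝓝 (Y x)) := by
  set l : Filter ℕ := (hyperfilter ℕ : Filter ℕ)
  have hl : l ≤ atTop := by
    rw [← Nat.cofinite_eq_atTop]; exact hyperfilter_le_cofinite
  have hex : ∀ x, ∃ y, Tendsto (fun n => X n x) l (𝓝 y) := by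
    intro x
    obtain ⟨y, -, hy⟩ := (isCompact_closedBall (0 : E) (‖x‖ + M)).ultrafilter_le_nhds
      ((hyperfilter ℕ).map fun n => X n x) (by
        rw [Ultrafilter.coe_map, le_principal_iff, mem_map]
        exact Eventually.of_forall fun n => by simpa using hb n x)
    exact ⟨y, hy⟩
  choose Y hY using hex
  have hYl : LipschitzWith K Y := by
    refine LipschitzWith.of_dist_le_mul fun x y => ?_
    exact le_of_tendsto ((hY x).dist (hY y)) (Eventually.of_forall fun n =>
      (hX n).dist_le_mul x y)
  have hunif : ∀ η > 0, ∀ᶠ n in l, ∀ x ∈ closedBall (0 : E) R, dist (X n x) (Y x) ≤ η := by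
    intro η hη
    obtain ⟨s, -, hs, hcov⟩ := (isCompact_closedBall (0 : E) R).finite_cover_balls
      (e := η / (2 * K + 1)) (by positivity)
    have : ∀ᶠ n in l, ∀ y ∈ s, dist (X n y) (Y y) < η / (2 * K + 1) :=
      (hs.eventually_all).2 fun y _ => Metric.tendsto_nhds.1 (hY y) _ (by positivity)
    filter_upwards [this] with n hn x hx
    obtain ⟨y, hy, hxy⟩ := mem_iUnion₂.1 (hcov hx)
    have h1 := (hX n).dist_le_mul x y
    have h2 := hYl.dist_le_mul y x
    rw [dist_comm y x] at h2
    have h3 : K * dist x y ≤ K * (η / (2 * K + 1)) := by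
      gcongr; exact (mem_ball.1 hxy).le
    calc _ ≤ dist (X n x) (X n y) + dist (X n y) (Y y) + dist (Y y) (Y x) :=
          dist_triangle4 _ _ _ _
      _ ≤ (2 * K + 1) * (η / (2 * K + 1)) := by linarith [hn y hy]
      _ = η := by field_simp
  refine ⟨Y, hYl, ?_, hY⟩
  have : IsProbabilityMeasure (ν.map Y) :=
    Measure.isProbabilityMeasure_map hYl.continuous.aemeasurable
  refine measure_ext_of_isC11 fun ψ Λ A hA hψ => ?_
  rw [integral_map hYl.continuous.aemeasurable hψ.smooth.continuous.aestronglyMeasurable]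
  refine tendsto_nhds_unique (f := fun n => ∫ x, ψ (X n x) ∂ν) (l := l) ?_
    ((hlim ψ Λ A hA hψ).mono_left hl)
  rw [Metric.tendsto_nhds]
  intro η hη
  have hΛ : 0 ≤ Λ := (norm_nonneg _).trans (hψ.bound 0)
  filter_upwards [hunif (η / (Λ + 1)) (by positivity)] with n hn
  have i1 : ∀ {Z : E → E}, LipschitzWith K Z → Integrable (fun x => ψ (Z x)) ν := fun hZ =>
    integrable_of_ae_norm_le hν (hψ.smooth.continuous.comp hZ.continuous)
  rw [dist_eq_norm, ← integral_sub (i1 (hX n)) (i1 hYl)]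
  refine (norm_integral_le_of_norm_le_const (C := Λ * (η / (Λ + 1))) ?_).trans_lt ?_
  · filter_upwards [hν] with x hx
    have := hψ.lipschitz.dist_le_mul (X n x) (Y x)
    rw [Real.coe_toNNReal _ hΛ, dist_eq_norm] at this
    exact this.trans (by gcongr; exact hn x (by simpa using hx))
  · rw [probReal_univ, mul_one, mul_div_assoc', div_lt_iff₀ (by positivity)]
    nlinarith

variable {T R B : ℝ} {L : ℝ≥0} {w₁ w₂ : ℝ → E → E} {μ₁ μ₂ : ℝ → Measure E}
variable {ε C h : ℝ} {S : (E → E) → E → E}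

namespace IsTransport

theorem norm_eulerMap_sub_le (hw₁ : IsTransport T R B L w₁ μ₁) (hw₂ : IsTransport T R B L w₂ μ₂)
    (hS : IsSmoothing ε C S) (hh : 0 ≤ h) {κ : ℝ → ℝ} (hκ : Continuous κ) (hκ0 : ∀ s, 0 ≤ κ s)
    (hκw : ∀ s ∈ Icc 0 T, ∀ x, ‖w₁ s x - w₂ s x‖ ≤ κ s) (j : ℕ) (hj : j * h ≤ T) (x y : E) :
    ‖eulerMap S w₁ h j x - eulerMap S w₂ h j y‖ ≤
      (1 + L * h) ^ j * (‖x - y‖ + ∫ s in (0 : ℝ)..(j * h), κ s) := by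
  induction j with
  | zero => simp [eulerMap]
  | succ j ih =>
    have hj' : j * h ≤ T := le_trans (by push_cast; linarith) hj
    specialize ih hj'
    have hab : j * h ≤ (j + 1 : ℕ) * h := by push_cast; linarith
    have h0 : 0 ≤ j * h := by positivity
    have hl₁ := hw₁.lipschitz_timeIntegral_step hh j
    have hl₂ := hw₂.lipschitz_timeIntegral_step hh j
    have hdiff : ∀ z, ‖timeIntegral w₁ (j * h) ((j + 1 : ℕ) * h) z -
        timeIntegral w₂ (j * h) ((j + 1 : ℕ) * h) z‖ ≤
        ∫ s in (j * h)..((j + 1 : ℕ) * h), κ s := by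
      intro z
      rw [timeIntegral, timeIntegral, ← intervalIntegral.integral_sub
        (hw₁.intervalIntegrable z _ _) (hw₂.intervalIntegrable z _ _)]
      refine intervalIntegral.norm_integral_le_of_norm_le hab (ae_of_all _ fun s hs => ?_)
        (hκ.intervalIntegrable _ _)
      exact hκw s ⟨h0.trans hs.1.le, hs.2.trans hj⟩ z
    have hstep : ‖eulerStep S w₁ h j (eulerMap S w₁ h j x) -
        eulerStep S w₂ h j (eulerMap S w₂ h j y)‖ ≤
        L * h * ‖eulerMap S w₁ h j x - eulerMap S w₂ h j y‖ +
          ∫ s in (j * h)..((j + 1 : ℕ) * h), κ s := by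
      refine (hS _ _ hl₁).2.2.2.2 _ _ hl₂ _ _ _ fun z => ?_
      refine (norm_sub_le_norm_sub_add_norm_sub _
        (timeIntegral w₁ (j * h) ((j + 1 : ℕ) * h) (eulerMap S w₂ h j y - z)) _).trans ?_
      refine add_le_add ?_ (hdiff _)
      have := hl₁.norm_sub_le (eulerMap S w₁ h j x - z) (eulerMap S w₂ h j y - z)
      simpa [hh] using this
    have hsplit : ∫ s in (0 : ℝ)..((j + 1 : ℕ) * h), κ s =
        (∫ s in (0 : ℝ)..(j * h), κ s) + ∫ s in (j * h)..((j + 1 : ℕ) * h), κ s :=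
      (intervalIntegral.integral_add_adjacent_intervals (hκ.intervalIntegrable _ _)
        (hκ.intervalIntegrable _ _)).symm
    have hI : 0 ≤ ∫ s in (j * h)..((j + 1 : ℕ) * h), κ s :=
      intervalIntegral.integral_nonneg hab fun s _ => hκ0 s
    have ha : 1 ≤ (1 + L * h) ^ (j + 1) := one_le_pow₀ (by
      have : 0 ≤ L * h := by positivity
      linarith)
    rw [hsplit]
    set p := eulerMap S w₁ h j x
    set q := eulerMap S w₂ h j y
    calc ‖(p + eulerStep S w₁ h j p) - (q + eulerStep S w₂ h j q)‖
        = ‖(p - q) + (eulerStep S w₁ h j p - eulerStep S w₂ h j q)‖ := by congr 1; abel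
      _ ≤ (1 + L * h) * ‖p - q‖ + ∫ s in (j * h)..((j + 1 : ℕ) * h), κ s := by
          refine (norm_add_le _ _).trans ?_
          linarith
      _ ≤ (1 + L * h) * ((1 + L * h) ^ j * (‖x - y‖ + ∫ s in (0 : ℝ)..(j * h), κ s)) +
          (1 + L * h) ^ (j + 1) * ∫ s in (j * h)..((j + 1 : ℕ) * h), κ s := by
          refine add_le_add (by gcongr) (le_mul_of_one_le_left hI ha)
      _ = _ := by ring

/-- Two solutions of linear continuity equations are transported from their initial data by maps
which stay close to each other. -/
theorem exists_flow_maps (hw₁ : IsTransport T R B L w₁ μ₁) (hw₂ : IsTransport T R B L w₂ μ₂)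
    {κ : ℝ → ℝ} (hκ : Continuous κ) (hκ0 : ∀ s, 0 ≤ κ s)
    (hκw : ∀ s ∈ Icc 0 T, ∀ x, ‖w₁ s x - w₂ s x‖ ≤ κ s) {t : ℝ} (ht : t ∈ Icc 0 T) :
    ∃ Y₁ Y₂ : E → E, Continuous Y₁ ∧ Continuous Y₂ ∧ (μ₁ 0).map Y₁ = μ₁ t ∧
      (μ₂ 0).map Y₂ = μ₂ t ∧ ∀ x y, dist (Y₁ x) (Y₂ y) ≤
        Real.exp (L * T) * (dist x y + ∫ s in (0 : ℝ)..t, κ s) := by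
  have hB : 0 ≤ B := (norm_nonneg _).trans (hw₁.bound 0 0)
  have hp₁ := hw₁.prob
  have hp₂ := hw₂.prob
  have hex : ∀ n : ℕ, ∃ S : (E → E) → E → E, ∃ C : ℝ, 0 ≤ C ∧
      IsSmoothing (1 / ((n : ℝ) + 1)) C S := fun n => exists_smoothing (by positivity)
  choose S C hC hS using hex
  choose N₁ hN₁ using fun n =>
    hw₁.exists_eulerMap_error_le (hS n) (hC n) (by positivity) ht
  choose N₂ hN₂ using fun n =>
    hw₂.exists_eulerMap_error_le (hS n) (hC n) (by positivity) ht
  let N : ℕ → ℕ := fun n => max (N₁ n) (N₂ n)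
  let h : ℕ → ℝ := fun n => t / (N n + 1 : ℕ)
  have hh : ∀ n, 0 ≤ h n := fun n => div_nonneg ht.1 (by positivity)
  have hNh : ∀ n, ((N n + 1 : ℕ) : ℝ) * h n = t := fun n => by
    simp only [h]; field_simp
  have hexp : ∀ n, (1 + L * h n) ^ (N n + 1) ≤ Real.exp (L * T) := fun n => by
    calc (1 + L * h n) ^ (N n + 1) ≤ Real.exp (L * h n) ^ (N n + 1) := by
          have := hh n
          gcongr
          linarith [Real.add_one_le_exp (L * h n)]
      _ = Real.exp (L * ((N n + 1 : ℕ) * h n)) := by rw [← Real.exp_nat_mul]; ring_nf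
      _ ≤ _ := by
          rw [Real.exp_le_exp, hNh]
          exact mul_le_mul_of_nonneg_left ht.2 L.2
  have hlip : ∀ {w : ℝ → E → E} {μ : ℝ → Measure E}, IsTransport T R B L w μ → ∀ n,
      LipschitzWith (Real.exp (L * T)).toNNReal (eulerMap (S n) w (h n) (N n + 1)) := by
    intro w μ hw n
    refine (hw.lipschitz_eulerMap (hS n) (hh n) (N n + 1)).weaken ?_
    rw [← NNReal.coe_le_coe, Real.coe_toNNReal _ (Real.exp_pos _).le]
    simpa [hh n] using hexp n
  have hbd : ∀ {w : ℝ → E → E} {μ : ℝ → Measure E}, IsTransport T R B L w μ → ∀ n x,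
      ‖eulerMap (S n) w (h n) (N n + 1) x‖ ≤ ‖x‖ + B * t := by
    intro w μ hw n x
    have := hw.norm_eulerMap_le (hS n) (hh n) (N n + 1) x
    rwa [hNh] at this
  have hlim : ∀ {a : ℕ → ℝ} {b c : ℝ}, (∀ n : ℕ, |b - a n| ≤ c * (1 / ((n : ℝ) + 1))) →
      Tendsto a atTop (𝓝 b) := by
    intro a b c hab
    rw [tendsto_iff_norm_sub_tendsto_zero]
    have hz : Tendsto (fun n : ℕ => c * (1 / ((n : ℝ) + 1))) atTop (𝓝 0) := by
      simpa using (tendsto_one_div_add_atTop_nhds_zero_nat (𝕜 := ℝ)).const_mul c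
    refine squeeze_zero (fun _ => norm_nonneg _) (fun n => ?_) hz
    rw [norm_sub_rev]
    exact hab n
  obtain ⟨Y₁, hY₁, hm₁, hl₁⟩ := exists_limit_map (hlip hw₁) (hbd hw₁) (μ := μ₁ t) (hw₁.supp 0)
    fun ψ Λ A hA hψ => hlim fun n => hN₁ n (N n) (le_max_left _ _) hA hψ
  obtain ⟨Y₂, hY₂, hm₂, hl₂⟩ := exists_limit_map (hlip hw₂) (hbd hw₂) (μ := μ₂ t) (hw₂.supp 0)
    fun ψ Λ A hA hψ => hlim fun n => hN₂ n (N n) (le_max_right _ _) hA hψ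
  refine ⟨Y₁, Y₂, hY₁.continuous, hY₂.continuous, hm₁, hm₂, fun x y => ?_⟩
  refine le_of_tendsto ((hl₁ x).dist (hl₂ y)) (Eventually.of_forall fun n => ?_)
  have := hw₁.norm_eulerMap_sub_le hw₂ (hS n) (hh n) hκ hκ0 hκw (N n + 1)
    ((hNh n).trans_le ht.2) x y
  rw [hNh] at this
  rw [dist_eq_norm, dist_eq_norm]
  refine this.trans (mul_le_mul_of_nonneg_right (hexp n) ?_)
  have := intervalIntegral.integral_nonneg (μ := volume) ht.1 fun s _ => hκ0 s
  positivity

end IsTransport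
end FlowMap

section Wasserstein
set_option linter.unusedSectionVars false
variable {E : Type*} [NormedAddCommGroup E] [InnerProductSpace ℝ E] [FiniteDimensional ℝ E]
  [MeasurableSpace E] [BorelSpace E]

theorem ae_norm_le_of_msupport_subset {μ : Measure E} {R : ℝ}
    (h : msupport μ ⊆ closedBall (0 : E) R) : ∀ᵐ x ∂μ, ‖x‖ ≤ R := by
  have : μ (closedBall (0 : E) R)ᶜ = 0 := by
    refine measure_null_of_locally_null _ fun x hx => ?_
    have hx' : x ∉ msupport μ := fun hx' => hx (h hx')
    simp only [msupport, mem_ofPred_eq, not_forall, not_not] at hx'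
    obtain ⟨U, hU, hU0⟩ := hx'
    exact ⟨U, mem_nhdsWithin_of_mem_nhds hU, hU0⟩
  filter_upwards [compl_mem_ae_iff.2 this] with x hx
  simpa using hx

theorem W1_nonneg (μ ν : Measure E) : 0 ≤ W1 μ ν := by
  refine Real.sInf_nonneg ?_
  rintro _ ⟨π, -, rfl⟩
  exact integral_nonneg fun _ => dist_nonneg

theorem W1_le_of_mem_couplings {μ ν : Measure E} {π : Measure (E × E)} (h : π ∈ couplings μ ν) :
    W1 μ ν ≤ ∫ p, dist p.1 p.2 ∂π := by
  refine csInf_le ⟨0, ?_⟩ ⟨π, h, rfl⟩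
  rintro _ ⟨π, -, rfl⟩
  exact integral_nonneg fun _ => dist_nonneg

theorem prod_mem_couplings (μ ν : Measure E) [IsProbabilityMeasure μ] [IsProbabilityMeasure ν] :
    μ.prod ν ∈ couplings μ ν :=
  ⟨inferInstance, by simp [Measure.map_fst_prod], by simp [Measure.map_snd_prod]⟩

theorem ae_norm_le_of_mem_couplings {μ ν : Measure E} {π : Measure (E × E)} {R : ℝ}
    (h : π ∈ couplings μ ν) (hμ : ∀ᵐ x ∂μ, ‖x‖ ≤ R) (hν : ∀ᵐ x ∂ν, ‖x‖ ≤ R) :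
    ∀ᵐ p ∂π, ‖p.1‖ ≤ R ∧ ‖p.2‖ ≤ R := by
  obtain ⟨-, h1, h2⟩ := h
  have a1 := ae_of_ae_map measurable_fst.aemeasurable (h1 ▸ hμ)
  have a2 := ae_of_ae_map measurable_snd.aemeasurable (h2 ▸ hν)
  filter_upwards [a1, a2] with p h h' using ⟨h, h'⟩

theorem integrable_of_mem_couplings {μ ν : Measure E} {π : Measure (E × E)} {R : ℝ}
    (h : π ∈ couplings μ ν) (hμ : ∀ᵐ x ∂μ, ‖x‖ ≤ R) (hν : ∀ᵐ x ∂ν, ‖x‖ ≤ R)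
    {f : E × E → ℝ} (hf : Continuous f) : Integrable f π := by
  have := h.1
  obtain ⟨C, hC⟩ := ((isCompact_closedBall (0 : E) R).prod
    (isCompact_closedBall (0 : E) R)).exists_bound_of_continuousOn hf.continuousOn
  refine Integrable.of_bound hf.aestronglyMeasurable C ?_
  filter_upwards [ae_norm_le_of_mem_couplings h hμ hν] with p hp
  exact hC p (by simpa using hp)

theorem exists_coupling_lt {μ ν : Measure E} [IsProbabilityMeasure μ] [IsProbabilityMeasure ν]
    {a : ℝ} (h : W1 μ ν < a) : ∃ π ∈ couplings μ ν, ∫ p, dist p.1 p.2 ∂π < a := by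
  obtain ⟨_, ⟨π, hπ, rfl⟩, hlt⟩ := exists_lt_of_csInf_lt
    (Set.Nonempty.image _ ⟨_, prod_mem_couplings μ ν⟩) h
  exact ⟨π, hπ, hlt⟩

theorem W1_le_of_ae_norm_le {μ ν : Measure E} [IsProbabilityMeasure μ] [IsProbabilityMeasure ν]
    {R : ℝ} (hμ : ∀ᵐ x ∂μ, ‖x‖ ≤ R) (hν : ∀ᵐ x ∂ν, ‖x‖ ≤ R) : W1 μ ν ≤ 2 * R := by
  have hc := prod_mem_couplings μ ν
  refine (W1_le_of_mem_couplings hc).trans ?_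
  have := integral_mono_ae (integrable_of_mem_couplings hc hμ hν continuous_dist)
    (integrable_const (2 * R)) (by
      filter_upwards [ae_norm_le_of_mem_couplings hc hμ hν] with p hp
      calc dist p.1 p.2 ≤ ‖p.1‖ + ‖p.2‖ := dist_le_norm_add_norm _ _
        _ ≤ _ := by linarith [hp.1, hp.2])
  simpa using this

/-- The easy half of Kantorovich-Rubinstein duality. -/
theorem abs_integral_sub_le_W1 {μ ν : Measure E} [IsProbabilityMeasure μ]
    [IsProbabilityMeasure ν] {R : ℝ} (hμ : ∀ᵐ x ∂μ, ‖x‖ ≤ R) (hν : ∀ᵐ x ∂ν, ‖x‖ ≤ R) {K : ℝ≥0}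
    {f : E → ℝ} (hf : LipschitzWith K f) :
    |(∫ x, f x ∂μ) - ∫ x, f x ∂ν| ≤ K * W1 μ ν := by
  have key : ∀ π ∈ couplings μ ν,
      |(∫ x, f x ∂μ) - ∫ x, f x ∂ν| ≤ K * ∫ p, dist p.1 p.2 ∂π := by
    intro π hπ
    have e1 : ∫ x, f x ∂μ = ∫ p, f p.1 ∂π := by
      rw [← hπ.2.1, integral_map measurable_fst.aemeasurable
        hf.continuous.aestronglyMeasurable]
    have e2 : ∫ x, f x ∂ν = ∫ p, f p.2 ∂π := by
      rw [← hπ.2.2, integral_map measurable_snd.aemeasurable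
        hf.continuous.aestronglyMeasurable]
    have i1 : Integrable (fun p : E × E => f p.1) π :=
      integrable_of_mem_couplings hπ hμ hν (hf.continuous.comp continuous_fst)
    have i2 : Integrable (fun p : E × E => f p.2) π :=
      integrable_of_mem_couplings hπ hμ hν (hf.continuous.comp continuous_snd)
    rw [e1, e2, ← integral_sub i1 i2, ← integral_const_mul]
    refine (abs_integral_le_integral_abs).trans (integral_mono (i1.sub i2).abs
      ((integrable_of_mem_couplings hπ hμ hν continuous_dist).const_mul _) fun p => ?_)
    exact hf.dist_le_mul p.1 p.2
  refine le_of_forall_pos_le_add fun ε hε => ?_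
  have hlt : W1 μ ν < W1 μ ν + ε / (K + 1) := by
    have : (0:ℝ) < ε / (K + 1) := by positivity
    linarith
  obtain ⟨π, hπ, hl⟩ := exists_coupling_lt hlt
  refine (key π hπ).trans ((mul_le_mul_of_nonneg_left hl.le K.2).trans ?_)
  have h2 : (K : ℝ) * (ε / ((K : ℝ) + 1)) ≤ ε := by
    rw [mul_div_assoc', div_le_iff₀ (by positivity)]
    nlinarith
  rw [mul_add]
  exact add_le_add le_rfl h2

/-- Pushing couplings forward bounds the transport cost of the images. -/
theorem W1_le_of_map {μ ν μ' ν' : Measure E} [IsProbabilityMeasure μ] [IsProbabilityMeasure ν]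
    {R : ℝ} (hμ : ∀ᵐ x ∂μ, ‖x‖ ≤ R) (hν : ∀ᵐ x ∂ν, ‖x‖ ≤ R) {X Y : E → E} (hX : Continuous X)
    (hY : Continuous Y) (hμX : μ.map X = μ') (hνY : ν.map Y = ν') {a b : ℝ} (ha : 0 ≤ a)
    (hXY : ∀ x y, dist (X x) (Y y) ≤ a * (dist x y + b)) :
    W1 μ' ν' ≤ a * (W1 μ ν + b) := by
  have key : ∀ π ∈ couplings μ ν, W1 μ' ν' ≤ a * ((∫ p, dist p.1 p.2 ∂π) + b) := by
    intro π hπ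
    have := hπ.1
    have hc : Continuous (Prod.map X Y) := hX.prodMap hY
    have hmem : π.map (Prod.map X Y) ∈ couplings μ' ν' := by
      refine ⟨Measure.isProbabilityMeasure_map hc.measurable.aemeasurable, ?_, ?_⟩
      · rw [Measure.map_map measurable_fst hc.measurable, ← hμX, ← hπ.2.1,
          Measure.map_map hX.measurable measurable_fst]
        rfl
      · rw [Measure.map_map measurable_snd hc.measurable, ← hνY, ← hπ.2.2,
          Measure.map_map hY.measurable measurable_snd]
        rfl
    refine (W1_le_of_mem_couplings hmem).trans ?_
    rw [integral_map hc.measurable.aemeasurable continuous_dist.aestronglyMeasurable]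
    have i0 := integrable_of_mem_couplings hπ hμ hν continuous_dist
    have i1 := integrable_of_mem_couplings hπ hμ hν (continuous_dist.comp hc)
    refine (integral_mono i1 ((i0.add (integrable_const b)).const_mul a)
      fun p => hXY p.1 p.2).trans_eq ?_
    rw [integral_const_mul, integral_add' i0 (integrable_const b)]
    simp
  refine le_of_forall_pos_le_add fun ε hε => ?_
  have hlt : W1 μ ν < W1 μ ν + ε / (a + 1) := by
    have : (0:ℝ) < ε / (a + 1) := by positivity
    linarith
  obtain ⟨π, hπ, hl⟩ := exists_coupling_lt hlt
  have h2 : a * (ε / (a + 1)) ≤ ε := by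
    rw [mul_div_assoc', div_le_iff₀ (by positivity)]
    nlinarith
  nlinarith [key π hπ, mul_le_mul_of_nonneg_left hl.le ha]

/-- The metric projection onto a closed ball. -/
theorem exists_ball_projection {R : ℝ} (hR : 0 ≤ R) :
    ∃ P : E → E, LipschitzWith 1 P ∧ (∀ x, ‖P x‖ ≤ R) ∧ ∀ x, ‖x‖ ≤ R → P x = x := by
  have hne : (closedBall (0 : E) R).Nonempty := ⟨0, by simpa using hR⟩
  have hcv : Convex ℝ (closedBall (0 : E) R) := convex_closedBall _ _
  choose P hP hPi using fun x : E => exists_norm_eq_iInf_of_complete_convex hne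
    isClosed_closedBall.isComplete hcv x
  have hvar : ∀ x, ∀ y ∈ closedBall (0 : E) R, ⟪x - P x, y - P x⟫ ≤ 0 := fun x =>
    (norm_eq_iInf_iff_real_inner_le_zero hcv (hP x)).1 (hPi x)
  refine ⟨P, LipschitzWith.of_dist_le_mul fun x y => ?_, fun x => by simpa using hP x,
    fun x hx => ?_⟩
  · have h1 := hvar x _ (hP y)
    have h2 := hvar y _ (hP x)
    have h3 : ‖P x - P y‖ ^ 2 ≤ ⟪x - y, P x - P y⟫ := by
      have e1 : ⟪x - P x, P y - P x⟫ + ⟪y - P y, P x - P y⟫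
          = ‖P x - P y‖ ^ 2 - ⟪x - y, P x - P y⟫ := by
        rw [← real_inner_self_eq_norm_sq]
        simp only [inner_sub_left, inner_sub_right]
        rw [real_inner_comm (P x) (P y)]
        ring
      linarith
    have h4 := real_inner_le_norm (x - y) (P x - P y)
    rw [dist_eq_norm, dist_eq_norm, NNReal.coe_one, one_mul]
    by_contra! hlt
    nlinarith [norm_nonneg (x - y), norm_nonneg (P x - P y)]
  · have h1 := hvar x x (by simpa using hx)
    rw [real_inner_self_nonpos, sub_eq_zero] at h1
    exact h1.symm

end Wasserstein

section MeanField
variable {d m : ℕ} {T R M r C : ℝ}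
  {H : EuclideanSpace ℝ (Fin d) → EuclideanSpace ℝ (Fin d)}
  {G : Fin d → EuclideanSpace ℝ (Fin d) → EuclideanSpace ℝ (Fin d)}
  {u : ℝ → Fin m → EuclideanSpace ℝ (Fin d)}

theorem norm_mfField_le {μ : Measure (EuclideanSpace ℝ (Fin d))} [IsProbabilityMeasure μ]
    {v Y : Fin m → EuclideanSpace ℝ (Fin d)} {x : EuclideanSpace ℝ (Fin d)} (hC : 0 ≤ C)
    (hH : ∀ x, ‖H x‖ ≤ C * (1 + ‖x‖)) (hG : ∀ ℓ x, ‖G ℓ x‖ ≤ C * (1 + ‖x‖))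
    (hμ : ∀ᵐ x ∂μ, ‖x‖ ≤ R) (hv : ∀ k, ‖v k‖ ≤ M) (hY : ∀ k, ‖Y k‖ ≤ r) (hx : ‖x‖ ≤ R) :
    ‖mfField H G μ v Y x‖ ≤
      C * (1 + 2 * R) + ∑ _ℓ : Fin d, (m : ℝ)⁻¹ * ∑ _k : Fin m, M * (C * (1 + (R + r))) := by
  refine (norm_add_le _ _).trans (add_le_add ?_ ?_)
  · have := norm_integral_le_of_norm_le_const (μ := μ) (f := fun ξ => H (x - ξ))
      (C := C * (1 + 2 * R)) (by
        filter_upwards [hμ] with ξ hξ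
        refine (hH _).trans ?_
        gcongr
        linarith [norm_sub_le x ξ])
    simpa using this
  · refine (norm_sum_le _ _).trans (Finset.sum_le_sum fun ℓ _ => ?_)
    rw [norm_smul, Real.norm_of_nonneg (by positivity)]
    gcongr
    refine (norm_sum_le _ _).trans (Finset.sum_le_sum fun k _ => ?_)
    rw [norm_smul]
    have h1 := (PiLp.norm_apply_le (v k) ℓ).trans (hv k)
    have h2 : ‖G ℓ (x - Y k)‖ ≤ C * (1 + (R + r)) := by
      refine (hG _ _).trans ?_
      gcongr
      linarith [norm_sub_le x (Y k), hY k]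
    exact mul_le_mul h1 h2 (norm_nonneg _) ((norm_nonneg _).trans h1)

theorem norm_mfField_sub_le {μ : Measure (EuclideanSpace ℝ (Fin d))} [IsProbabilityMeasure μ]
    {v Y : Fin m → EuclideanSpace ℝ (Fin d)} {x y : EuclideanSpace ℝ (Fin d)} {K : ℝ≥0}
    {κ : Fin d → ℝ≥0} (hHc : Continuous H) (hH : LipschitzOnWith K H (closedBall 0 (2 * R)))
    (hG : ∀ ℓ, LipschitzOnWith (κ ℓ) (G ℓ) (closedBall 0 (R + r)))
    (hμ : ∀ᵐ x ∂μ, ‖x‖ ≤ R) (hv : ∀ k, ‖v k‖ ≤ M) (hY : ∀ k, ‖Y k‖ ≤ r) (hx : ‖x‖ ≤ R)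
    (hy : ‖y‖ ≤ R) :
    ‖mfField H G μ v Y x - mfField H G μ v Y y‖ ≤
      (K + ∑ ℓ : Fin d, (m : ℝ)⁻¹ * ∑ _k : Fin m, M * κ ℓ) * ‖x - y‖ := by
  rw [mfField, mfField, add_sub_add_comm, add_mul]
  refine (norm_add_le _ _).trans (add_le_add ?_ ?_)
  · have hi : ∀ z : EuclideanSpace ℝ (Fin d), Integrable (fun ξ => H (z - ξ)) μ := fun z =>
      integrable_of_ae_norm_le hμ (hHc.comp (continuous_const.sub continuous_id))
    rw [← integral_sub (hi x) (hi y)]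
    have := norm_integral_le_of_norm_le_const (μ := μ) (f := fun ξ => H (x - ξ) - H (y - ξ))
      (C := K * ‖x - y‖) (by
        filter_upwards [hμ] with ξ hξ
        have h1 : x - ξ ∈ closedBall (0 : EuclideanSpace ℝ (Fin d)) (2 * R) := by
          rw [mem_closedBall_zero_iff]
          linarith [norm_sub_le x ξ]
        have h2 : y - ξ ∈ closedBall (0 : EuclideanSpace ℝ (Fin d)) (2 * R) := by
          rw [mem_closedBall_zero_iff]
          linarith [norm_sub_le y ξ]
        simpa [dist_eq_norm] using hH.dist_le_mul _ h1 _ h2)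
    simpa using this
  · rw [← Finset.sum_sub_distrib, Finset.sum_mul]
    refine (norm_sum_le _ _).trans (Finset.sum_le_sum fun ℓ _ => ?_)
    rw [← smul_sub, ← Finset.sum_sub_distrib, norm_smul, Real.norm_of_nonneg (by positivity),
      mul_assoc, Finset.sum_mul]
    gcongr
    refine (norm_sum_le _ _).trans (Finset.sum_le_sum fun k _ => ?_)
    rw [← smul_sub, norm_smul, mul_assoc]
    have h1 := (PiLp.norm_apply_le (v k) ℓ).trans (hv k)
    have h2 : x - Y k ∈ closedBall (0 : EuclideanSpace ℝ (Fin d)) (R + r) := by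
      rw [mem_closedBall_zero_iff]
      linarith [norm_sub_le x (Y k), hY k]
    have h3 : y - Y k ∈ closedBall (0 : EuclideanSpace ℝ (Fin d)) (R + r) := by
      rw [mem_closedBall_zero_iff]
      linarith [norm_sub_le y (Y k), hY k]
    have h4 := (hG ℓ).dist_le_mul _ h2 _ h3
    rw [dist_eq_norm, dist_eq_norm, sub_sub_sub_cancel_right] at h4
    exact mul_le_mul h1 h4 (norm_nonneg _) ((norm_nonneg _).trans h1)

/-- Stability of the mean-field vector field with respect to the measure and the leaders. -/
theorem HypA.exists_norm_mfField_sub_le (hA : HypA m H G) (hR : 0 < R) (hM : 0 ≤ M) :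
    ∃ K ≥ 0, ∀ μ ν : Measure (EuclideanSpace ℝ (Fin d)),
      IsProbabilityMeasure μ → IsProbabilityMeasure ν →
      msupport μ ⊆ closedBall 0 R → msupport ν ⊆ closedBall 0 R →
      ∀ v Y Y' : Fin m → EuclideanSpace ℝ (Fin d), (∀ k, ‖v k‖ ≤ M) → ∀ x, ‖x‖ ≤ R →
        ‖mfField H G μ v Y x - mfField H G ν v Y' x‖ ≤ K * chiDist Y Y' μ ν := by
  obtain ⟨-, -, -, h4, h5⟩ := hA
  obtain ⟨L₁, hL₁, h4⟩ := h4 R hR R hR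
  obtain ⟨L₂, hL₂, h5⟩ := h5 R hR M hM
  refine ⟨L₁ + d * L₂, by positivity, fun μ ν hμ hν hμR hνR v Y Y' hv x hx => ?_⟩
  have hx' : x ∈ closedBall (0 : EuclideanSpace ℝ (Fin d)) R := by simpa using hx
  have hD : 0 ≤ (m : ℝ)⁻¹ * ∑ k : Fin m, ‖Y k - Y' k‖ := by positivity
  have hW := W1_nonneg μ ν
  have e1 := h4 μ ν hμ hν hμR hνR x hx'
  have e2 : ‖(∑ ℓ : Fin d, (m : ℝ)⁻¹ • ∑ k : Fin m, (v k ℓ) • G ℓ (x - Y k)) -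
      ∑ ℓ : Fin d, (m : ℝ)⁻¹ • ∑ k : Fin m, (v k ℓ) • G ℓ (x - Y' k)‖ ≤
      ∑ _ℓ : Fin d, L₂ * ((m : ℝ)⁻¹ * ∑ k : Fin m, ‖Y k - Y' k‖) := by
    rw [← Finset.sum_sub_distrib]
    refine (norm_sum_le _ _).trans (Finset.sum_le_sum fun ℓ _ => ?_)
    rw [← smul_sub, ← Finset.sum_sub_distrib]
    simp only [← smul_sub]
    exact h5 ℓ (fun k => v k ℓ) (fun k => (PiLp.norm_apply_le (v k) ℓ).trans (hv k)) Y Y' x hx'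
  rw [Finset.sum_const, Finset.card_univ, Fintype.card_fin, nsmul_eq_mul] at e2
  rw [mfField, mfField, add_sub_add_comm, chiDist]
  refine (norm_add_le _ _).trans ((add_le_add e1 e2).trans ?_)
  have : 0 ≤ L₁ * ((m : ℝ)⁻¹ * ∑ k : Fin m, ‖Y k - Y' k‖) := by positivity
  have : 0 ≤ d * L₂ * W1 μ ν := by positivity
  linarith

namespace IsMFSol
variable {Y : ℝ → Fin m → EuclideanSpace ℝ (Fin d)} {μ : ℝ → Measure (EuclideanSpace ℝ (Fin d))}

theorem continuous_leader (hs : IsMFSol T H G u Y μ) (hT : 0 ≤ T) (humeas : Measurable u)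
    (hu : ∀ t k, ‖u t k‖ ≤ M) (k : Fin m) : Continuous fun s => Y (projIcc 0 T hT s) k := by
  have hi : ∀ a b, IntervalIntegrable (fun s => u s k) volume a b := fun a b =>
    intervalIntegrable_const.mono_fun'
      ((measurable_pi_apply k).comp humeas).aestronglyMeasurable
      (Eventually.of_forall fun s => hu s k)
  have := (intervalIntegral.continuous_primitive hi 0).comp
    (continuous_subtype_val.comp (continuous_projIcc (h := hT)))
  refine ((continuous_const (y := Y 0 k)).add this).congr fun s => ?_
  exact (hs.2.2.2.1 k _ (projIcc 0 T hT s).2).symm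

theorem norm_leader_le (hs : IsMFSol T H G u Y μ) (hu : ∀ t k, ‖u t k‖ ≤ M) (hM : 0 ≤ M)
    {t : ℝ} (ht : t ∈ Icc 0 T) (k : Fin m) : ‖Y t k‖ ≤ ‖Y 0 k‖ + M * T := by
  rw [hs.2.2.2.1 k t ht]
  refine (norm_add_le _ _).trans (add_le_add le_rfl ?_)
  refine (intervalIntegral.norm_integral_le_of_norm_le_const fun s _ => hu s k).trans ?_
  rw [sub_zero, abs_of_nonneg ht.1]
  exact mul_le_mul_of_nonneg_left ht.2 hM

theorem W1_le_chiDist (Y Y' : Fin m → EuclideanSpace ℝ (Fin d))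
    (μ ν : Measure (EuclideanSpace ℝ (Fin d))) : W1 μ ν ≤ chiDist Y Y' μ ν :=
  le_add_of_nonneg_left (by positivity)

theorem exists_uniform_W1_le (hs : IsMFSol T H G u Y μ) {θ : ℝ} (hθ : 0 < θ) :
    ∃ δ > 0, ∀ s ∈ Icc 0 T, ∀ t ∈ Icc 0 T, |s - t| < δ →
      ∃ q ∈ Icc 0 T, W1 (μ s) (μ q) ≤ θ ∧ W1 (μ t) (μ q) ≤ θ := by
  choose! δ hδ hδW using fun t ht => hs.2.2.1 t ht θ hθ
  obtain ⟨η, hη, hcov⟩ := lebesgue_number_lemma_of_metric (isCompact_Icc (a := (0 : ℝ)) (b := T))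
    (c := fun i : Icc (0 : ℝ) T => ball (i : ℝ) (δ i)) (fun _ => isOpen_ball)
    (fun x hx => mem_iUnion.2 ⟨⟨x, hx⟩, mem_ball_self (hδ x hx)⟩)
  refine ⟨η, hη, fun s hs' t ht hst => ?_⟩
  obtain ⟨q, hq⟩ := hcov s hs'
  have h1 : s ∈ ball (q : ℝ) (δ q) := hq (mem_ball_self hη)
  have h2 : t ∈ ball (q : ℝ) (δ q) := hq (by rwa [mem_ball, dist_comm])
  exact ⟨q, q.2, ((W1_le_chiDist _ _ _ _).trans_lt (hδW q q.2 s hs' h1)).le,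
    ((W1_le_chiDist _ _ _ _).trans_lt (hδW q q.2 t ht h2)).le⟩

theorem continuous_convolution (hs : IsMFSol T H G u Y μ) (hA : HypA m H G) (hT : 0 ≤ T)
    (hR : 0 < R) (hμR : ∀ t ∈ Icc 0 T, msupport (μ t) ⊆ closedBall 0 R)
    {x : EuclideanSpace ℝ (Fin d)} (hx : ‖x‖ ≤ R) :
    Continuous fun s => ∫ ξ, H (x - ξ) ∂μ (projIcc 0 T hT s) := by
  obtain ⟨L, hL, h4⟩ := hA.2.2.2.1 R hR R hR
  have hc : Continuous fun q : Icc (0 : ℝ) T => ∫ ξ, H (x - ξ) ∂μ q := by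
    refine Metric.continuous_iff.2 fun q ε hε => ?_
    obtain ⟨δ, hδ, hW⟩ := hs.2.2.1 q q.2 (ε / (L + 1)) (by positivity)
    refine ⟨δ, hδ, fun p hp => ?_⟩
    have h1 := (W1_le_chiDist _ _ _ _).trans_lt (hW p p.2 hp)
    have h2 := h4 (μ p) (μ q) (hs.1 p p.2) (hs.1 q q.2) (hμR p p.2) (hμR q q.2) x
      (by simpa using hx)
    rw [dist_eq_norm]
    refine h2.trans_lt ?_
    rw [lt_div_iff₀ (by positivity)] at h1
    nlinarith [W1_nonneg (μ p) (μ q)]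
  exact hc.comp continuous_projIcc

theorem integral_eq_of_isC11 (hs : IsMFSol T H G u Y μ)
    (hμR : ∀ t ∈ Icc 0 T, ∀ᵐ x ∂μ t, ‖x‖ ≤ R) (hR : 0 < R) {ψ : EuclideanSpace ℝ (Fin d) → ℝ}
    (hψ : ContDiff ℝ ∞ ψ) {t : ℝ} (ht : t ∈ Icc 0 T) :
    ∫ x, ψ x ∂μ t = (∫ x, ψ x ∂μ 0) + ∫ s in (0 : ℝ)..t,
      ∫ x, fderiv ℝ ψ x (mfField H G (μ s) (u s) (Y s) x) ∂μ s := by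
  let χ : ContDiffBump (0 : EuclideanSpace ℝ (Fin d)) := ⟨R + 1, R + 2, by linarith, by linarith⟩
  have hφ : ContDiff ℝ ∞ fun x => χ x * ψ x := χ.contDiff.mul hψ
  have hloc : ∀ x, ‖x‖ ≤ R → (fun x => χ x * ψ x) =ᶠ[𝓝 x] ψ := fun x hx => by
    have hx' : x ∈ ball (0 : EuclideanSpace ℝ (Fin d)) χ.rIn := by
      rw [mem_ball_zero_iff]
      exact hx.trans_lt (by simp [χ])
    filter_upwards [χ.eventuallyEq_one_of_mem_ball hx'] with y hy
    simp [hy]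
  have hval : ∀ s ∈ Icc 0 T, ∫ x, χ x * ψ x ∂μ s = ∫ x, ψ x ∂μ s := fun s hs' => by
    refine integral_congr_ae ?_
    filter_upwards [hμR s hs'] with x hx using (hloc x hx).eq_of_nhds
  have := hs.2.2.2.2 _ hφ χ.hasCompactSupport.mul_right t ht
  rw [hval t ht, hval 0 ⟨le_rfl, ht.1.trans ht.2⟩] at this
  rw [this]
  congr 1
  refine intervalIntegral.integral_congr fun s hs' => ?_
  rw [uIcc_of_le ht.1] at hs'
  refine integral_congr_ae ?_
  filter_upwards [hμR s ⟨hs'.1, hs'.2.trans ht.2⟩] with x hx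
  rw [gradient, (hloc x hx).fderiv_eq, InnerProductSpace.toDual_symm_apply]

end IsMFSol

/-- Extending a solution constantly in time and truncating its field in space yields a
transport equation with bounded, globally Lipschitz field, uniformly in the solution. -/
theorem HypA.exists_isTransport (hA : HypA m H G) (hT : 0 ≤ T) (humeas : Measurable u)
    (hM : 0 ≤ M) (hu : ∀ t k, ‖u t k‖ ≤ M) (hR : 0 < R) (r : ℝ)
    {P : EuclideanSpace ℝ (Fin d) → EuclideanSpace ℝ (Fin d)} (hPl : LipschitzWith 1 P)
    (hPR : ∀ x, ‖P x‖ ≤ R) (hPx : ∀ x, ‖x‖ ≤ R → P x = x) :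
    ∃ (B : ℝ) (L : ℝ≥0), ∀ (Y : ℝ → Fin m → EuclideanSpace ℝ (Fin d))
      (μ : ℝ → Measure (EuclideanSpace ℝ (Fin d))), IsMFSol T H G u Y μ →
      (∀ k, ‖Y 0 k‖ ≤ r) → (∀ t ∈ Icc 0 T, msupport (μ t) ⊆ closedBall 0 R) →
      IsTransport T R B L
        (fun s x => mfField H G (μ (projIcc 0 T hT s)) (u s) (Y (projIcc 0 T hT s)) (P x))
        (fun s => μ (projIcc 0 T hT s)) := by
  obtain ⟨C, hC, hHC, hGC⟩ := hA.2.2.1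
  obtain ⟨K, hK⟩ := hA.1.locallyLipschitzOn.exists_lipschitzOnWith_of_compact
    (isCompact_closedBall (0 : EuclideanSpace ℝ (Fin d)) (2 * R))
  choose κ hκ using fun ℓ => (hA.2.1 ℓ).locallyLipschitzOn.exists_lipschitzOnWith_of_compact
    (isCompact_closedBall (0 : EuclideanSpace ℝ (Fin d)) (R + (r + M * T)))
  refine ⟨C * (1 + 2 * R) +
      ∑ _ℓ : Fin d, (m : ℝ)⁻¹ * ∑ _k : Fin m, M * (C * (1 + (R + (r + M * T)))),
    (K + ∑ ℓ : Fin d, (m : ℝ)⁻¹ * ∑ _k : Fin m, M * κ ℓ).toNNReal,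
    fun Y μ hs hY hμR => ?_⟩
  have hμR' : ∀ t ∈ Icc 0 T, ∀ᵐ x ∂μ t, ‖x‖ ≤ R := fun t ht =>
    ae_norm_le_of_msupport_subset (hμR t ht)
  have hYt : ∀ t ∈ Icc 0 T, ∀ k, ‖Y t k‖ ≤ r + M * T := fun t ht k =>
    (hs.norm_leader_le hu hM ht k).trans (by linarith [hY k])
  have hmem : ∀ s, (projIcc 0 T hT s : ℝ) ∈ Icc 0 T := fun s => (projIcc 0 T hT s).2
  have hprob : ∀ s, IsProbabilityMeasure (μ (projIcc 0 T hT s)) := fun s => hs.1 _ (hmem s)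
  refine ⟨hprob, fun s => hμR' _ (hmem s), fun θ hθ => ?_, fun s x => ?_, fun s => ?_,
    fun x => ?_, fun ψ Λ A _ hψ t ht => ?_⟩
  · obtain ⟨δ, hδ, hW⟩ := hs.exists_uniform_W1_le (half_pos hθ)
    refine ⟨δ, hδ, fun s t hst k f hf => ?_⟩
    obtain ⟨q, hq, h1, h2⟩ := hW _ (hmem s) _ (hmem t)
      ((abs_projIcc_sub_projIcc hT).trans_lt hst)
    have := hprob s
    have := hprob t
    have := hs.1 q hq
    have a1 := abs_integral_sub_le_W1 (hμR' _ (hmem s)) (hμR' _ hq) hf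
    have a2 := abs_integral_sub_le_W1 (hμR' _ (hmem t)) (hμR' _ hq) hf
    rw [abs_sub_comm] at a2
    have b1 := mul_le_mul_of_nonneg_left h1 k.2
    have b2 := mul_le_mul_of_nonneg_left h2 k.2
    refine (abs_sub_le _ (∫ x, f x ∂μ q) _).trans ((add_le_add (a1.trans b1)
      (a2.trans b2)).trans_eq ?_)
    rw [← mul_add, add_halves]
    rfl
  · have := hprob s
    exact norm_mfField_le hC hHC hGC (hμR' _ (hmem s)) (hu s) (hYt _ (hmem s)) (hPR x)
  · refine LipschitzWith.of_dist_le_mul fun x y => ?_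
    have := hprob s
    rw [dist_eq_norm, Real.coe_toNNReal _ (by positivity)]
    refine (norm_mfField_sub_le hA.1.continuous hK hκ (hμR' _ (hmem s)) (hu s) (hYt _ (hmem s))
      (hPR x) (hPR y)).trans (mul_le_mul_of_nonneg_left ?_ (by positivity))
    rw [← dist_eq_norm]
    simpa using hPl.dist_le_mul x y
  · refine (hs.continuous_convolution hA hT hR hμR (hPR x)).measurable.add
      (Finset.measurable_fun_sum _ fun ℓ _ => Measurable.fun_const_smul
        (Finset.measurable_fun_sum _ fun k _ => Measurable.fun_smul ?_ ?_) _)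
    · exact (PiLp.continuous_apply 2 _ ℓ).measurable.comp ((measurable_pi_apply k).comp humeas)
    · exact ((hA.2.1 ℓ).continuous.comp
        (continuous_const.sub (hs.continuous_leader hT humeas hu k))).measurable
  · have h0 : (0 : ℝ) ∈ Icc 0 T := ⟨le_rfl, hT⟩
    simp only [projIcc_of_mem hT ht, projIcc_of_mem hT h0]
    rw [hs.integral_eq_of_isC11 hμR' hR hψ.smooth ht]
    congr 1
    refine intervalIntegral.integral_congr fun s hs' => ?_
    rw [uIcc_of_le ht.1] at hs'
    have hs'' : s ∈ Icc 0 T := ⟨hs'.1, hs'.2.trans ht.2⟩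
    simp only [projIcc_of_mem hT hs'']
    refine integral_congr_ae ?_
    filter_upwards [hμR' s hs''] with x hx
    rw [hPx x hx]

end MeanField

/-- A nonlocal Gronwall estimate in exponentially weighted supremum norm: no regularity of `f`
beyond boundedness is needed. -/
theorem gronwall_of_bounded_majorants {f : ℝ → ℝ} {T a b K D F : ℝ} (hT : 0 ≤ T) (ha : 0 ≤ a)
    (hb : 0 ≤ b) (hK : 0 ≤ K) (hD : 0 ≤ D) (hf0 : ∀ t ∈ Icc 0 T, 0 ≤ f t) (hfF : ∀ t ∈ Icc 0 T, f t ≤ F)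
    (h : ∀ κ : ℝ → ℝ, Continuous κ → (∀ s, 0 ≤ κ s) → (∀ s ∈ Icc 0 T, K * (D + f s) ≤ κ s) →
      ∀ t ∈ Icc 0 T, f t ≤ a * (b + ∫ s in (0 : ℝ)..t, κ s)) :
    ∀ t ∈ Icc 0 T, f t ≤ 2 * a * (b + K * T * D) * Real.exp ((2 * a * K + 1) * T) := by
  have hθ : 0 < 2 * a * K + 1 := by positivity
  set θ := 2 * a * K + 1 with hθ_def
  have h0 : (0 : ℝ) ∈ Icc 0 T := ⟨le_rfl, hT⟩
  set g : ℝ → ℝ := fun s => Real.exp (-(θ * s)) * f s with hg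
  have hbdd : BddAbove (g '' Icc 0 T) := by
    refine ⟨F, ?_⟩
    rintro _ ⟨s, hs, rfl⟩
    have h1 : Real.exp (-(θ * s)) ≤ 1 := Real.exp_le_one_iff.2 (by
      have := mul_nonneg hθ.le hs.1
      linarith)
    exact (mul_le_of_le_one_left (hf0 s hs) h1).trans (hfF s hs)
  set S := sSup (g '' Icc 0 T)
  have hS : ∀ s ∈ Icc 0 T, g s ≤ S := fun s hs => le_csSup hbdd (mem_image_of_mem g hs)
  have hS0 : 0 ≤ S := (mul_nonneg (Real.exp_pos _).le (hf0 0 h0)).trans (hS 0 h0)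
  have hfS : ∀ s ∈ Icc 0 T, f s ≤ S * Real.exp (θ * s) := fun s hs => by
    have h1 := hS s hs
    rw [hg] at h1
    simp only [Real.exp_neg] at h1
    rwa [inv_mul_le_iff₀ (Real.exp_pos _), mul_comm] at h1
  have hint : ∀ t ∈ Icc 0 T, ∫ s in (0 : ℝ)..t, K * (D + S * Real.exp (θ * s)) ≤
      K * T * D + K * S * (Real.exp (θ * t) / θ) := fun t ht => by
    have hd : ∀ s ∈ uIcc 0 t, HasDerivAt (fun s => K * (D * s + S * (Real.exp (θ * s) / θ)))
        (K * (D + S * Real.exp (θ * s))) s := fun s _ => by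
      have h1 : HasDerivAt (fun s => Real.exp (θ * s) / θ) (Real.exp (θ * s)) s := by
        have := (((hasDerivAt_id s).const_mul θ).exp).div_const θ
        simpa [hθ.ne'] using this
      have h2 := (((hasDerivAt_id s).const_mul D).add (h1.const_mul S)).const_mul K
      simpa using h2
    rw [intervalIntegral.integral_eq_sub_of_hasDerivAt hd
      (by apply Continuous.intervalIntegrable; fun_prop)]
    have h1 : K * D * t ≤ K * D * T := mul_le_mul_of_nonneg_left ht.2 (by positivity)
    have h2 : 0 ≤ K * S * (Real.exp (θ * 0) / θ) := by positivity
    linarith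
  have hmain : ∀ t ∈ Icc 0 T, g t ≤ a * (b + K * T * D) + S / 2 := fun t ht => by
    have h1 := h (fun s => K * (D + S * Real.exp (θ * s))) (by fun_prop)
      (fun s => by positivity) (fun s hs => by gcongr; exact hfS s hs) t ht
    have h2 : f t ≤ a * (b + K * T * D) + a * K / θ * S * Real.exp (θ * t) :=
      (h1.trans (mul_le_mul_of_nonneg_left (add_le_add le_rfl (hint t ht)) ha)).trans_eq (by ring)
    have h3 : a * K / θ ≤ 1 / 2 := by
      rw [div_le_iff₀ hθ]
      linarith
    have h4 : 1 ≤ Real.exp (θ * t) := Real.one_le_exp (mul_nonneg hθ.le ht.1)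
    simp only [hg, Real.exp_neg]
    rw [inv_mul_le_iff₀ (Real.exp_pos _)]
    have h5 : a * (b + K * T * D) ≤ Real.exp (θ * t) * (a * (b + K * T * D)) :=
      le_mul_of_one_le_left (by positivity) h4
    have h6 : a * K / θ * (S * Real.exp (θ * t)) ≤ 1 / 2 * (S * Real.exp (θ * t)) :=
      mul_le_mul_of_nonneg_right h3 (by positivity)
    linarith
  have hSle : S ≤ a * (b + K * T * D) + S / 2 := by
    refine csSup_le (Set.Nonempty.image _ ⟨0, h0⟩) ?_
    rintro _ ⟨t, ht, rfl⟩
    exact hmain t ht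
  intro t ht
  refine (hfS t ht).trans (mul_le_mul (by linarith) ?_ (Real.exp_pos _).le (by positivity))
  exact Real.exp_le_exp.2 (mul_le_mul_of_nonneg_left ht.2 hθ.le)

end MeanFieldStability

/-- Stability/continuous dependence for the coupled leader/mean-field
system: under Hypothesis (A), two solutions relative to the same control `u` satisfy
`‖(Y¹(t),μ¹(t)) − (Y²(t),μ²(t))‖_χ ≤ C_T ‖(Y¹(0),μ¹(0)) − (Y²(0),μ²(0))‖_χ` on `[0,T]`. -/
theorem mean_field_stability
    {d m : ℕ} (hm : 0 < m) (T : ℝ) (hT : 0 < T)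
    (H : EuclideanSpace ℝ (Fin d) → EuclideanSpace ℝ (Fin d))
    (G : Fin d → EuclideanSpace ℝ (Fin d) → EuclideanSpace ℝ (Fin d))
    (hA : HypA m H G)
    (𝒰 : Set (Fin m → EuclideanSpace ℝ (Fin d)))
    (h𝒰 : IsCompact 𝒰) (h𝒰ne : 𝒰.Nonempty)
    (u : ℝ → Fin m → EuclideanSpace ℝ (Fin d))
    (humeas : Measurable u) (hu𝒰 : ∀ t, u t ∈ 𝒰)
    (Y₁ Y₂ : ℝ → Fin m → EuclideanSpace ℝ (Fin d))
    (μ₁ μ₂ : ℝ → Measure (EuclideanSpace ℝ (Fin d)))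
    (hsol₁ : IsMFSol T H G u Y₁ μ₁) (hsol₂ : IsMFSol T H G u Y₂ μ₂) :
    ∃ C > 0, ∀ t ∈ Icc (0:ℝ) T,
      chiDist (Y₁ t) (Y₂ t) (μ₁ t) (μ₂ t)
        ≤ C * chiDist (Y₁ 0) (Y₂ 0) (μ₁ 0) (μ₂ 0) := by
  obtain ⟨M, hMu⟩ := h𝒰.isBounded.exists_norm_le
  have hM : 0 ≤ M := (norm_nonneg _).trans (hMu _ (hu𝒰 0))
  have hu : ∀ t k, ‖u t k‖ ≤ M := fun t k => (norm_le_pi_norm _ k).trans (hMu _ (hu𝒰 t))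
  obtain ⟨R₁, hR₁, hμR₁⟩ := hsol₁.2.1
  obtain ⟨R₂, -, hμR₂⟩ := hsol₂.2.1
  have hR : 0 < max R₁ R₂ := lt_max_of_lt_left hR₁
  set R := max R₁ R₂
  replace hμR₁ : ∀ t ∈ Icc 0 T, msupport (μ₁ t) ⊆ closedBall 0 R := fun t ht =>
    (hμR₁ t ht).trans (closedBall_subset_closedBall (le_max_left _ _))
  replace hμR₂ : ∀ t ∈ Icc 0 T, msupport (μ₂ t) ⊆ closedBall 0 R := fun t ht =>
    (hμR₂ t ht).trans (closedBall_subset_closedBall (le_max_right _ _))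
  have hT0 : (0 : ℝ) ∈ Icc 0 T := ⟨le_rfl, hT.le⟩
  obtain ⟨P, hPl, hPR, hPx⟩ := exists_ball_projection (E := EuclideanSpace ℝ (Fin d)) hR.le
  obtain ⟨B, L, hBL⟩ := hA.exists_isTransport hT.le humeas hM hu hR
    (max ‖Y₁ 0‖ ‖Y₂ 0‖) hPl hPR hPx
  have ht₁ := hBL Y₁ μ₁ hsol₁
    (fun k => (norm_le_pi_norm _ k).trans (le_max_left _ _)) hμR₁
  have ht₂ := hBL Y₂ μ₂ hsol₂
    (fun k => (norm_le_pi_norm _ k).trans (le_max_right _ _)) hμR₂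
  obtain ⟨K, hK, hfield⟩ := hA.exists_norm_mfField_sub_le hR hM
  have hYdiff : ∀ t ∈ Icc 0 T, ∀ k, Y₁ t k - Y₂ t k = Y₁ 0 k - Y₂ 0 k := fun t ht k => by
    rw [hsol₁.2.2.2.1 k t ht, hsol₂.2.2.2.1 k t ht, add_sub_add_right_eq_sub]
  set D : ℝ := (m : ℝ)⁻¹ * ∑ k : Fin m, ‖Y₁ 0 k - Y₂ 0 k‖ with hDdef
  have hD : 0 ≤ D := by positivity
  have hchi : ∀ t ∈ Icc 0 T, chiDist (Y₁ t) (Y₂ t) (μ₁ t) (μ₂ t) = D + W1 (μ₁ t) (μ₂ t) :=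
    fun t ht => by simp only [chiDist, hYdiff t ht, hDdef]
  have hW0 := W1_nonneg (μ₁ 0) (μ₂ 0)
  have hsupp₁ := fun t ht => ae_norm_le_of_msupport_subset (hμR₁ t ht)
  have hsupp₂ := fun t ht => ae_norm_le_of_msupport_subset (hμR₂ t ht)
  have key := gronwall_of_bounded_majorants (f := fun t => W1 (μ₁ t) (μ₂ t)) (F := 2 * R)
    (a := Real.exp (L * T)) (b := W1 (μ₁ 0) (μ₂ 0)) hT.le (Real.exp_pos _).le hW0 hK hD
    (fun t _ => W1_nonneg _ _)
    (fun t ht => by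
      have := hsol₁.1 t ht
      have := hsol₂.1 t ht
      exact W1_le_of_ae_norm_le (hsupp₁ t ht) (hsupp₂ t ht))
    (fun κ hκ hκ0 hκf t ht => by
      obtain ⟨X₁, X₂, hX₁, hX₂, hm₁, hm₂, hX⟩ := ht₁.exists_flow_maps ht₂ hκ hκ0
        (fun s hs x => by
          simp only [projIcc_of_mem hT.le hs]
          refine (hfield _ _ (hsol₁.1 s hs) (hsol₂.1 s hs) (hμR₁ s hs) (hμR₂ s hs) (u s)
            (Y₁ s) (Y₂ s) (hu s) (P x) (hPR x)).trans ?_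
          rw [hchi s hs]
          exact hκf s hs) ht
      simp only [projIcc_of_mem hT.le ht, projIcc_of_mem hT.le hT0] at hm₁ hm₂
      have := hsol₁.1 0 hT0
      have := hsol₂.1 0 hT0
      exact W1_le_of_map (hsupp₁ 0 hT0) (hsupp₂ 0 hT0) hX₁ hX₂ hm₁ hm₂ (Real.exp_pos _).le hX)
  set a := Real.exp (L * T)
  have ha : 0 ≤ a := (Real.exp_pos _).le
  set e := Real.exp ((2 * a * K + 1) * T)
  have he : 0 ≤ e := (Real.exp_pos _).le
  refine ⟨1 + 2 * a * (1 + K * T) * e, by positivity, fun t ht => ?_⟩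
  rw [hchi t ht, hchi 0 hT0]
  have h1 := key t ht
  have h2 : 0 ≤ 2 * a * e * D := by positivity
  have h3 : 0 ≤ 2 * a * e * (K * T) * W1 (μ₁ 0) (μ₂ 0) := by positivity
  linarith

end
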